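/- arXiv:0907.1116 — 2 statements merged into one kernel-verified Lean document; each statement's English description precedes it below -/
import Mathlib

section
/- Let q ≥ 2 be an integer, 0 < H < 1 − 1/(2q), let c_{1,q,H} > 0 be the constant for which Z_n := V_n/(c_{1,q,H} √n) converges in law to N(0,1), and let N be a standard normal random variable. Then for every c > 0, (1/(−log(cε))) · [ Σ_{n≥1} (1/n) P(|Z_n| > c ε √n) − Σ_{n≥1} (1/n) P(|N| > c ε √n) ] converges to 0 as ε → 0⁺. -/
open MeasureTheory ProbabilityTheory Filter Real Topology

/-- A (centered) fractional Brownian motion with Hurst parameter `H`: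
all finite-dimensional distributions are centered Gaussian (equivalently, every finite
linear combination of values of the process is a centered real Gaussian), with covariance
`E (B s * B t) = (s^(2H) + t^(2H) - |t-s|^(2H)) / 2` for nonnegative times. -/
structure IsFractionalBrownianMotion {Ω : Type*} [MeasureSpace Ω]
    (B : ℝ → Ω → ℝ) (H : ℝ) : Prop where
  measurable : ∀ t : ℝ, Measurable (B t)
  gaussian_fdd : ∀ (n : ℕ) (t : Fin n → ℝ), (∀ i, 0 ≤ t i) → ∀ c : Fin n → ℝ,
    ∃ v : NNReal,
      Measure.map (fun ω => ∑ i, c i * B (t i) ω) (ℙ : Measure Ω) = gaussianReal 0 v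
  covariance : ∀ s t : ℝ, 0 ≤ s → 0 ≤ t →
    ∫ ω, B s ω * B t ω ∂(ℙ : Measure Ω)
      = (s ^ (2 * H) + t ^ (2 * H) - |t - s| ^ (2 * H)) / 2

/-- `V_n = ∑_{k=0}^{n-1} H_q (n^H (B_{(k+1)/n} - B_{k/n}))`, where `H_q` is the Hermite
polynomial of degree `q`. -/
noncomputable def hermiteVariation {Ω : Type*} [MeasureSpace Ω]
    (B : ℝ → Ω → ℝ) (H : ℝ) (q n : ℕ) (ω : Ω) : ℝ :=
  ∑ k ∈ Finset.range n,
    Polynomial.aeval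
      ((n : ℝ) ^ H * (B (((k : ℝ) + 1) / n) ω - B ((k : ℝ) / n) ω))
      (Polynomial.hermite q)

/-- Convergence in distribution of a sequence of real random variables to a law `μ`. -/
def TendstoInDistribution {Ω : Type*} [MeasureSpace Ω]
    (Z : ℕ → Ω → ℝ) (μ : Measure ℝ) : Prop :=
  ∀ f : BoundedContinuousFunction ℝ ℝ,
    Tendsto (fun n => ∫ ω, f (Z n ω) ∂(ℙ : Measure Ω)) atTop (𝓝 (∫ x, f x ∂μ))


lemma poly_integrable (P : Polynomial ℝ) (v : NNReal) :
    Integrable (fun x => P.eval x) (gaussianReal 0 v) := by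
  induction P using Polynomial.induction_on' with
  | add p q hp hq => refine (hp.add hq).congr (Eventually.of_forall fun x => by simp)
  | monomial n a =>
    simp only [Polynomial.eval_monomial]
    apply Integrable.const_mul
    have h := (memLp_id_gaussianReal (μ := 0) (v := v) (n : NNReal))
    have := h.integrable_norm_pow'
    refine (integrable_norm_iff (by fun_prop)).1 ?_
    simpa using this

lemma hermite_mean_zero (q : ℕ) (hq : 1 ≤ q) :
    ∫ x, Polynomial.aeval x (Polynomial.hermite q) ∂(gaussianReal 0 1) = 0 := by
  obtain ⟨k, rfl⟩ : ∃ k, q = k + 1 := ⟨q - 1, by omega⟩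
  have hintg : ∀ n, Integrable (fun x : ℝ => gaussianPDFReal 0 1 x * Polynomial.aeval x (Polynomial.hermite n)) := by
    intro n
    have h := poly_integrable ((Polynomial.hermite n).map (algebraMap ℤ ℝ)) 1
    simp only [Polynomial.eval_map_algebraMap] at h
    rw [gaussianReal_of_var_ne_zero _ (by norm_num),
      integrable_withDensity_iff_integrable_smul' (by fun_prop) (by simp [gaussianPDF])] at h
    refine h.congr (Eventually.of_forall fun x => ?_)
    simp [gaussianPDF, ENNReal.toReal_ofReal (gaussianPDFReal_nonneg 0 1 x)]
  rw [integral_gaussianReal_eq_integral_smul (by norm_num)]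
  simp only [smul_eq_mul]
  have hd : ∀ x : ℝ, HasDerivAt
      (fun x => gaussianPDFReal 0 1 x * Polynomial.aeval x (Polynomial.hermite k))
      (-(gaussianPDFReal 0 1 x * Polynomial.aeval x (Polynomial.hermite (k+1)))) x := by
    intro x
    have h1 : HasDerivAt (gaussianPDFReal 0 1) (gaussianPDFReal 0 1 x * (-x)) x := by
      unfold gaussianPDFReal
      have : HasDerivAt (fun x : ℝ => -(x - 0)^2 / (2 * ((1:NNReal):ℝ))) (-x) x := by
        have := (((hasDerivAt_id x).sub_const 0).pow 2).neg.div_const (2 * ((1:NNReal):ℝ))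
        convert! this using 1
        simp
        ring
      convert! this.exp.const_mul _ using 1
      ring
    convert! h1.mul (Polynomial.hasDerivAt_aeval (Polynomial.hermite k) x) using 1
    rw [Polynomial.hermite_succ]
    simp
    ring
  have := integral_eq_zero_of_hasDerivAt_of_integrable hd (hintg (k+1)).neg (hintg k)
  rw [integral_neg] at this
  linarith

lemma poly_lip (P : Polynomial ℝ) : ∃ K : ℝ, 0 ≤ K ∧ ∃ m : ℕ, ∀ a b : ℝ,
    |P.eval a - P.eval b| ≤ K * |a - b| * (1 + |a| + |b|) ^ m := by
  induction P using Polynomial.induction_on' with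
  | add p q hp hq =>
    obtain ⟨K, hK, m, h⟩ := hp
    obtain ⟨L, hL, l, g⟩ := hq
    refine ⟨K + L, by positivity, m + l, fun a b => ?_⟩
    have hT : 1 ≤ 1 + |a| + |b| := by linarith [abs_nonneg a, abs_nonneg b]
    have e1 := h a b
    have e2 := g a b
    have p1 := pow_le_pow_right₀ hT (Nat.le_add_right m l)
    have p2 := pow_le_pow_right₀ hT (Nat.le_add_left l m)
    simp only [Polynomial.eval_add]
    calc _ = |(p.eval a - p.eval b) + (q.eval a - q.eval b)| := by ring_nf
      _ ≤ _ := abs_add_le _ _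
      _ ≤ _ := add_le_add e1 e2
      _ ≤ K * |a - b| * (1 + |a| + |b|) ^ (m+l) + L * |a - b| * (1 + |a| + |b|) ^ (m+l) := by
        gcongr
      _ = _ := by ring
  | monomial n c =>
    refine ⟨|c| * n, by positivity, n - 1, fun a b => ?_⟩
    simp only [Polynomial.eval_monomial]
    rw [← mul_sub, abs_mul]
    have := abs_pow_sub_pow_le a b n
    calc _ ≤ |c| * (|a - b| * n * max |a| |b| ^ (n-1)) := by gcongr
      _ ≤ |c| * (|a - b| * n * (1 + |a| + |b|) ^ (n-1)) := by
        gcongr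
        apply max_le <;> linarith [abs_nonneg a, abs_nonneg b]
      _ = _ := by ring

lemma sum3_pow (u v : ℝ) (hu : 0 ≤ u) (hv : 0 ≤ v) (k : ℕ) :
    (1 + u + v) ^ k ≤ 3 ^ k * (1 + u ^ k + v ^ k) := by
  have hM : ∃ M, 0 ≤ M ∧ 1 + u + v ≤ 3 * M ∧ M ^ k ≤ 1 + u ^ k + v ^ k := by
    have := pow_nonneg hu k
    have := pow_nonneg hv k
    rcases le_total 1 u with h1 | h1 <;> rcases le_total u v with h2 | h2 <;>
      rcases le_total 1 v with h3 | h3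
    all_goals first
      | exact ⟨u, hu, by linarith, by linarith⟩
      | exact ⟨v, hv, by linarith, by linarith⟩
      | exact ⟨1, by norm_num, by linarith, by rw [one_pow]; linarith⟩
  obtain ⟨M, h0, h1, h2⟩ := hM
  calc (1 + u + v) ^ k ≤ (3 * M) ^ k := by gcongr
    _ = 3 ^ k * M ^ k := by ring
    _ ≤ _ := by gcongr

lemma poly_cross (P : Polynomial ℝ) : ∃ K : ℝ, 0 ≤ K ∧ ∃ m : ℕ, ∀ x y ρ : ℝ, |ρ| ≤ 1 →
    |P.eval x * P.eval y - P.eval x * P.eval (y - ρ * x)| ≤ |ρ| * (K * (1 + |x| ^ m + |y| ^ m)) := by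
  obtain ⟨K, hK, m, h⟩ := poly_lip P
  refine ⟨(|P.eval 0| + K) * (K * 2 ^ m) * 3 ^ (2 * m + 2), by positivity, 2 * m + 2,
    fun x y ρ hρ => ?_⟩
  have hx := abs_nonneg x
  have hy := abs_nonneg y
  set T := 1 + |x| + |y| with hT
  have hT1 : 1 ≤ T := by linarith
  have hρx : |ρ * x| ≤ |x| := by rw [abs_mul]; nlinarith
  have h1 : |P.eval x| ≤ (|P.eval 0| + K) * T ^ (m+1) := by
    have e := h x 0
    simp only [sub_zero, abs_zero, add_zero] at e
    have e2 : |P.eval x| ≤ |P.eval 0| + |P.eval x - P.eval 0| := by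
      have := abs_add_le (P.eval 0) (P.eval x - P.eval 0)
      simpa using this
    have e3 : K * |x| * (1 + |x|) ^ m ≤ K * T * T ^ m := by
      gcongr <;> linarith
    have e4 : 1 ≤ T ^ (m+1) := one_le_pow₀ hT1
    have e5 : |P.eval 0| * 1 ≤ |P.eval 0| * T ^ (m+1) := by gcongr
    calc _ ≤ |P.eval 0| * T ^ (m+1) + K * T * T ^ m := by linarith
      _ = _ := by ring
  have h2 : |P.eval y - P.eval (y - ρ * x)| ≤ |ρ| * (K * 2 ^ m * T ^ (m+1)) := by
    have e := h y (y - ρ * x)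
    have e1 : |y - (y - ρ * x)| = |ρ| * |x| := by rw [← abs_mul]; ring_nf
    rw [e1] at e
    have e2 : |y - ρ * x| ≤ |y| + |x| := by
      have := abs_sub y (ρ * x); linarith
    calc _ ≤ _ := e
      _ ≤ K * (|ρ| * T) * (2 * T) ^ m := by
        gcongr <;> linarith
      _ = _ := by ring
  rw [← mul_sub, abs_mul]
  calc _ ≤ ((|P.eval 0| + K) * T ^ (m+1)) * (|ρ| * (K * 2 ^ m * T ^ (m+1))) := by gcongr
    _ = |ρ| * ((|P.eval 0| + K) * (K * 2 ^ m) * T ^ (2*m+2)) := by ring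
    _ ≤ |ρ| * ((|P.eval 0| + K) * (K * 2 ^ m) * (3 ^ (2*m+2) * (1 + |x| ^ (2*m+2) + |y| ^ (2*m+2)))) := by
      gcongr
      exact sum3_pow _ _ hx hy _
    _ = _ := by ring

lemma poly_memLp_two {Ω : Type*} [MeasurableSpace Ω] (μ : Measure Ω)
    (X : Ω → ℝ) (v : NNReal) (hX : Measurable X) (hXl : μ.map X = gaussianReal 0 v)
    (P : Polynomial ℝ) : MemLp (fun ω => P.eval (X ω)) 2 μ := by
  have hP : Measurable (fun ω => P.eval (X ω)) :=
    (P.continuous.measurable).comp hX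
  rw [memLp_two_iff_integrable_sq hP.aestronglyMeasurable]
  have h := poly_integrable (P ^ 2) v
  rw [← hXl] at h
  have := h.comp_measurable hX
  simpa [Function.comp_def] using this

lemma cov_bound {Ω : Type*} [MeasurableSpace Ω] (μ : Measure Ω) [IsProbabilityMeasure μ]
    (P : Polynomial ℝ) (hP : ∫ x, P.eval x ∂(gaussianReal 0 1) = 0) :
    ∃ C : ℝ, 0 ≤ C ∧ ∀ X Y : Ω → ℝ, Measurable X → Measurable Y →
      HasGaussianLaw (fun ω => (X ω, Y ω)) μ →
      μ.map X = gaussianReal 0 1 → μ.map Y = gaussianReal 0 1 →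
      |∫ ω, P.eval (X ω) * P.eval (Y ω) ∂μ| ≤ C * |∫ ω, X ω * Y ω ∂μ| := by
  obtain ⟨K, hK, m, h⟩ := poly_cross P
  set M := ∫ x, |x| ^ m ∂(gaussianReal 0 1) with hM
  have hM0 : 0 ≤ M := integral_nonneg fun x => by positivity
  refine ⟨K * (1 + M + M), by positivity, fun X Y hX hY hXY hXl hYl => ?_⟩
  have hX2 : MemLp X 2 μ := by simpa using poly_memLp_two μ X 1 hX hXl Polynomial.X
  have hY2 : MemLp Y 2 μ := by simpa using poly_memLp_two μ Y 1 hY hYl Polynomial.X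
  have hEX : ∫ ω, X ω ∂μ = 0 := by
    have := integral_map (μ := μ) hX.aemeasurable (f := fun x : ℝ => x) (by fun_prop)
    rw [← this, hXl]; exact integral_id_gaussianReal
  have sq1 : ∀ Z : Ω → ℝ, Measurable Z → μ.map Z = gaussianReal 0 1 → ∫ ω, Z ω ^ 2 ∂μ = 1 := by
    intro Z hZ hZl
    have := integral_map (μ := μ) hZ.aemeasurable (f := fun x : ℝ => x ^ 2) (by fun_prop)
    rw [← this, hZl]
    have v := variance_fun_id_gaussianReal (μ := 0) (v := 1)
    rw [variance_of_integral_eq_zero (by fun_prop) (by simp)] at v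
    simpa using v
  set ρ := ∫ ω, X ω * Y ω ∂μ with hρ
  have iXY : Integrable (fun ω => X ω * Y ω) μ := hX2.integrable_mul hY2
  have hρ1 : |ρ| ≤ 1 := by
    have ix := hX2.integrable_sq
    have iy := hY2.integrable_sq
    have ixy : Integrable (fun ω => X ω ^ 2 + Y ω ^ 2) μ := ix.add iy
    have e1 := sq1 X hX hXl
    have e2 := sq1 Y hY hYl
    rw [abs_le]
    constructor
    · have : 0 ≤ ∫ ω, (X ω ^ 2 + Y ω ^ 2) + 2 * (X ω * Y ω) ∂μ :=
        integral_nonneg fun ω => by simp only [Pi.zero_apply]; nlinarith [sq_nonneg (X ω + Y ω)]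
      rw [integral_add ixy (iXY.const_mul 2), integral_add ix iy, integral_const_mul] at this
      linarith
    · have : 0 ≤ ∫ ω, (X ω ^ 2 + Y ω ^ 2) - 2 * (X ω * Y ω) ∂μ :=
        integral_nonneg fun ω => by simp only [Pi.zero_apply]; nlinarith [sq_nonneg (X ω - Y ω)]
      rw [integral_sub ixy (iXY.const_mul 2), integral_add ix iy, integral_const_mul] at this
      linarith
  have hR : Measurable (fun ω => Y ω - ρ * X ω) := by fun_prop
  have hXR : HasGaussianLaw (fun ω => (X ω, Y ω - ρ * X ω)) μ := by
    have := hXY.map ((ContinuousLinearMap.fst ℝ ℝ ℝ).prod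
      (ContinuousLinearMap.snd ℝ ℝ ℝ - ρ • ContinuousLinearMap.fst ℝ ℝ ℝ))
    exact this
  have hR2 : MemLp (fun ω => Y ω - ρ * X ω) 2 μ := hY2.sub (hX2.const_mul ρ)
  have hcov : cov[X, fun ω => Y ω - ρ * X ω; μ] = 0 := by
    rw [covariance_eq_sub hX2 hR2]
    simp only [hEX, zero_mul, sub_zero, Pi.mul_apply]
    have : ∀ ω, X ω * (Y ω - ρ * X ω) = X ω * Y ω - ρ * X ω ^ 2 := fun ω => by ring
    simp only [this]
    rw [integral_sub iXY (hX2.integrable_sq.const_mul ρ), integral_const_mul, sq1 X hX hXl]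
    simp [hρ]
  have hind := hXR.indepFun_of_covariance_eq_zero hcov
  have hPm : Measurable (fun x => P.eval x) := P.continuous.measurable
  have hind2 := hind.comp hPm hPm
  have hEPX : ∫ ω, P.eval (X ω) ∂μ = 0 := by
    have := integral_map (μ := μ) hX.aemeasurable (f := fun x : ℝ => P.eval x)
      (hPm.aestronglyMeasurable)
    rw [← this, hXl, hP]
  have hprod : ∫ ω, P.eval (X ω) * P.eval (Y ω - ρ * X ω) ∂μ = 0 := by
    have := hind2.integral_fun_mul_eq_mul_integral (hPm.comp hX).aestronglyMeasurable
      (hPm.comp hR).aestronglyMeasurable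
    simp only [Function.comp_def, hEPX, zero_mul] at this
    exact this
  have lX := poly_memLp_two μ X 1 hX hXl P
  have lY := poly_memLp_two μ Y 1 hY hYl P
  have lR : MemLp (fun ω => P.eval (Y ω - ρ * X ω)) 2 μ := by
    have hg := hXR.snd
    have e := hg.map_eq_gaussianReal
    have e0 : ∫ ω, (Y ω - ρ * X ω) ∂μ = 0 := by
      have hEY : ∫ ω, Y ω ∂μ = 0 := by
        have := integral_map (μ := μ) hY.aemeasurable (f := fun x : ℝ => x) (by fun_prop)
        rw [← this, hYl]; exact integral_id_gaussianReal
      rw [integral_sub (hY2.integrable (by norm_num)) ((hX2.integrable (by norm_num)).const_mul ρ),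
        integral_const_mul, hEX, hEY]
      simp
    rw [e0] at e
    exact poly_memLp_two μ _ _ hR e P
  have i1 : Integrable (fun ω => P.eval (X ω) * P.eval (Y ω)) μ := lX.integrable_mul lY
  have i2 : Integrable (fun ω => P.eval (X ω) * P.eval (Y ω - ρ * X ω)) μ := lX.integrable_mul lR
  have mom : ∀ Z : Ω → ℝ, Measurable Z → μ.map Z = gaussianReal 0 1 →
      Integrable (fun ω => |Z ω| ^ m) μ ∧ ∫ ω, |Z ω| ^ m ∂μ = M := by
    intro Z hZ hZl
    constructor
    · have h := (memLp_id_gaussianReal (μ := 0) (v := 1) (m : NNReal))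
      have := h.integrable_norm_pow'
      rw [← hZl] at this
      simpa [Function.comp_def] using this.comp_measurable hZ
    · have := integral_map (μ := μ) hZ.aemeasurable (f := fun x : ℝ => |x| ^ m) (by fun_prop)
      rw [← this, hZl]
  obtain ⟨mX, mX'⟩ := mom X hX hXl
  obtain ⟨mY, mY'⟩ := mom Y hY hYl
  have key : ∫ ω, P.eval (X ω) * P.eval (Y ω) ∂μ =
      ∫ ω, (P.eval (X ω) * P.eval (Y ω) - P.eval (X ω) * P.eval (Y ω - ρ * X ω)) ∂μ := by
    rw [integral_sub i1 i2, hprod, sub_zero]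
  have ib : Integrable (fun ω => (1:ℝ) + |X ω| ^ m + |Y ω| ^ m) μ :=
    ((integrable_const 1).add mX).add mY
  rw [key]
  calc _ ≤ ∫ ω, |P.eval (X ω) * P.eval (Y ω) - P.eval (X ω) * P.eval (Y ω - ρ * X ω)| ∂μ :=
        abs_integral_le_integral_abs
    _ ≤ ∫ ω, |ρ| * (K * (1 + |X ω| ^ m + |Y ω| ^ m)) ∂μ := by
        apply integral_mono (i1.sub i2).abs ((ib.const_mul K).const_mul |ρ|)
        intro ω
        exact h _ _ _ hρ1
    _ = _ := by
        have i3 : Integrable (fun ω => (1:ℝ) + |X ω| ^ m) μ := (integrable_const 1).add mX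
        rw [integral_const_mul, integral_const_mul, integral_add i3 mY,
          integral_add (integrable_const 1) mX, mX', mY']
        simp
        ring

noncomputable def fgnRho (H : ℝ) (r : ℕ) : ℝ :=
  (((r : ℝ) + 1) ^ (2 * H) + |(r : ℝ) - 1| ^ (2 * H) - 2 * (r : ℝ) ^ (2 * H)) / 2

lemma fgnRho_zero (H : ℝ) (hH : 0 < H) : fgnRho H 0 = 1 := by
  have : (2 * H) ≠ 0 := by positivity
  simp [fgnRho, Real.zero_rpow this]

lemma fgnRho_sum (H : ℝ) (hH0 : 0 < H) (hH1 : H < 1) (n : ℕ) (hn : 1 ≤ n) :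
    ∑ r ∈ Finset.range n, |fgnRho H r| ≤ 2 * (n : ℝ) ^ (max (2 * H - 1) 0) := by
  obtain ⟨k, rfl⟩ : ∃ k, n = k + 1 := ⟨n - 1, by omega⟩
  set d : ℕ → ℝ := fun i => ((i : ℝ) + 1) ^ (2 * H) - (i : ℝ) ^ (2 * H) with hd
  have hne : (2 * H) ≠ 0 := by positivity
  have hd0 : d 0 = 1 := by simp [hd, Real.zero_rpow hne]
  have hdk : ∀ i, 0 ≤ d i := fun i => by
    simp only [hd, sub_nonneg]
    apply Real.rpow_le_rpow <;> first | positivity | linarith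
  have hrho : ∀ i : ℕ, fgnRho H (i + 1) = (d (i+1) - d i) / 2 := by
    intro i
    simp only [fgnRho, hd]
    push_cast
    rw [add_sub_cancel_right, abs_of_nonneg (by positivity : (0:ℝ) ≤ i)]
    ring
  have mid : ∀ i : ℕ, ((i:ℝ) + 1) = (1/2:ℝ) * i + (1/2) * (i + 2) := fun i => by ring
  rw [Finset.sum_range_succ', fgnRho_zero H hH0, abs_one]
  rcases le_total 1 (2 * H) with h | h
  · have hpos : ∀ i : ℕ, 0 ≤ fgnRho H (i+1) := by
      intro i
      have hx : (i:ℝ) ∈ Set.Ici (0:ℝ) := by simp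
      have hy : (i:ℝ) + 2 ∈ Set.Ici (0:ℝ) := by simp only [Set.mem_Ici]; positivity
      have := (convexOn_rpow h).2 hx hy (by norm_num : (0:ℝ) ≤ 1/2)
        (by norm_num : (0:ℝ) ≤ 1/2) (by norm_num)
      simp only [smul_eq_mul] at this
      rw [← mid] at this
      rw [hrho]
      simp only [hd]
      push_cast
      have e : (i:ℝ) + 1 + 1 = i + 2 := by ring
      rw [e]
      linarith
    have : ∑ i ∈ Finset.range k, |fgnRho H (i+1)| = (d k - d 0) / 2 := by
      rw [← Finset.sum_range_sub, Finset.sum_div]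
      exact Finset.sum_congr rfl fun i _ => by rw [abs_of_nonneg (hpos i), hrho]
    rw [this, hd0, max_eq_left (by linarith)]
    have hk : (0:ℝ) < (k:ℝ) + 1 := by positivity
    have hb := one_add_mul_self_le_rpow_one_add (s := -1 / ((k:ℝ)+1)) (p := 2 * H)
      (by rw [le_div_iff₀ hk]; linarith [(Nat.cast_nonneg k : (0:ℝ) ≤ k)]) h
    have e1 : 1 + -1 / ((k:ℝ)+1) = k / (k+1) := by field_simp; ring
    rw [e1, Real.div_rpow (by positivity) hk.le, le_div_iff₀ (by positivity)] at hb
    have e2 : ((k:ℝ)+1) ^ (2*H) = ((k:ℝ)+1) * ((k:ℝ)+1) ^ (2*H-1) := by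
      rw [Real.rpow_sub_one hk.ne']; field_simp
    have e3 : d k ≤ 2 * H * ((k:ℝ)+1) ^ (2*H-1) := by
      simp only [hd]
      have : (1 + 2 * H * (-1 / ((k:ℝ) + 1))) * ((k:ℝ) + 1) ^ (2 * H) =
        ((k:ℝ) + 1) ^ (2 * H) - 2 * H * ((k:ℝ)+1) ^ (2*H-1) := by
        rw [e2]; field_simp; ring
      linarith
    have e4 : 1 ≤ ((k:ℝ)+1) ^ (2*H-1) := Real.one_le_rpow (by simp) (by linarith)
    push_cast
    nlinarith
  · have hpos : ∀ i : ℕ, fgnRho H (i+1) ≤ 0 := by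
      intro i
      have hx : (i:ℝ) ∈ Set.Ici (0:ℝ) := by simp
      have hy : (i:ℝ) + 2 ∈ Set.Ici (0:ℝ) := by simp only [Set.mem_Ici]; positivity
      have := (Real.concaveOn_rpow (by positivity) h).2 hx hy (by norm_num : (0:ℝ) ≤ 1/2)
        (by norm_num : (0:ℝ) ≤ 1/2) (by norm_num)
      simp only [smul_eq_mul] at this
      rw [← mid] at this
      rw [hrho]
      simp only [hd]
      push_cast
      have e : (i:ℝ) + 1 + 1 = i + 2 := by ring
      rw [e]
      linarith
    have : ∑ i ∈ Finset.range k, |fgnRho H (i+1)| = -((d k - d 0) / 2) := by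
      rw [← Finset.sum_range_sub, Finset.sum_div, ← Finset.sum_neg_distrib]
      exact Finset.sum_congr rfl fun i _ => by rw [abs_of_nonpos (hpos i), hrho]
    rw [this, hd0, max_eq_right (by linarith), Real.rpow_zero]
    linarith [hdk k]

lemma double_sum_dist (f : ℕ → ℝ) (hf : ∀ r, 0 ≤ f r) (n : ℕ) :
    ∑ k ∈ Finset.range n, ∑ l ∈ Finset.range n, f (Nat.dist k l) ≤
      2 * n * ∑ r ∈ Finset.range n, f r := by
  induction n with
  | zero => simp
  | succ n ih =>
    rw [Finset.sum_range_succ]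
    simp only [Finset.sum_range_succ _ n, Finset.sum_add_distrib]
    have h1 : ∑ l ∈ Finset.range n, f (Nat.dist n l) = ∑ r ∈ Finset.range n, f (r + 1) := by
      rw [← Finset.sum_range_reflect]
      refine Finset.sum_congr rfl fun l hl => ?_
      have := Finset.mem_range.1 hl
      congr 1
      simp only [Nat.dist]; omega
    have h2 : ∑ l ∈ Finset.range n, f (Nat.dist l n) = ∑ r ∈ Finset.range n, f (r + 1) := by
      rw [← h1]; exact Finset.sum_congr rfl fun l _ => by rw [Nat.dist_comm]
    have h3 := Finset.sum_range_succ' f n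
    rw [Finset.sum_range_succ] at h3
    rw [h1, h2, Nat.dist_self]
    have := hf 0
    have := hf n
    push_cast
    have hn : (0:ℝ) ≤ n := by positivity
    nlinarith [mul_nonneg hn (hf n)]

section fbm
set_option linter.unusedSectionVars false
variable {Ω : Type*} [MeasureSpace Ω] [IsProbabilityMeasure (ℙ : Measure Ω)]

noncomputable def fInc (B : ℝ → Ω → ℝ) (H : ℝ) (n k : ℕ) (ω : Ω) : ℝ :=
  (n : ℝ) ^ H * (B (((k : ℝ) + 1) / n) ω - B ((k : ℝ) / n) ω)

lemma fInc_measurable {B : ℝ → Ω → ℝ} {H : ℝ} (hB : IsFractionalBrownianMotion B H) (n k : ℕ) :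
    Measurable (fInc B H n k) := by
  have h1 := hB.measurable (((k : ℝ) + 1) / n)
  have h2 := hB.measurable ((k : ℝ) / n)
  unfold fInc
  fun_prop

lemma fInc_comb {B : ℝ → Ω → ℝ} {H : ℝ} (hB : IsFractionalBrownianMotion B H) (n k l : ℕ)
    (a b : ℝ) : ∃ v : NNReal,
    Measure.map (fun ω => a * fInc B H n k ω + b * fInc B H n l ω) ℙ = gaussianReal 0 v := by
  obtain ⟨v, hv⟩ := hB.gaussian_fdd 4
    ![((k : ℝ) + 1) / n, (k : ℝ) / n, ((l : ℝ) + 1) / n, (l : ℝ) / n]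
    (by intro i; fin_cases i <;> simp <;> positivity)
    ![a * (n:ℝ)^H, -(a * (n:ℝ)^H), b * (n:ℝ)^H, -(b * (n:ℝ)^H)]
  refine ⟨v, ?_⟩
  rw [← hv]
  congr 1
  ext ω
  simp [Fin.sum_univ_four, fInc]
  ring

lemma fbm_memLp {B : ℝ → Ω → ℝ} {H : ℝ} (hB : IsFractionalBrownianMotion B H) (t : ℝ)
    (ht : 0 ≤ t) : MemLp (B t) 2 ℙ := by
  obtain ⟨v, hv⟩ := hB.gaussian_fdd 1 (fun _ => t) (fun _ => ht) (fun _ => 1)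
  simp only [Finset.univ_unique, one_mul, Finset.sum_const, Finset.card_singleton, one_smul] at hv
  simpa using poly_memLp_two ℙ (B t) v (hB.measurable t) hv Polynomial.X

lemma fInc_cov {B : ℝ → Ω → ℝ} {H : ℝ} (hB : IsFractionalBrownianMotion B H) (n k l : ℕ)
    (hn : 1 ≤ n) :
    ∫ ω, fInc B H n k ω * fInc B H n l ω ∂(ℙ : Measure Ω) = fgnRho H (Nat.dist k l) := by
  have key : ∀ k l : ℕ, l ≤ k →
    ∫ ω, fInc B H n k ω * fInc B H n l ω ∂(ℙ : Measure Ω) = fgnRho H (k - l) := by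
    intro k l hlk
    obtain ⟨r, rfl⟩ := Nat.exists_eq_add_of_le hlk
    have hn0 : (0:ℝ) < n := by exact_mod_cast hn
    have p1 : (0:ℝ) ≤ (((l + r : ℕ) : ℝ) + 1) / n := by positivity
    have p2 : (0:ℝ) ≤ ((l + r : ℕ) : ℝ) / n := by positivity
    have p3 : (0:ℝ) ≤ ((l : ℝ) + 1) / n := by positivity
    have p4 : (0:ℝ) ≤ (l : ℝ) / n := by positivity
    have m1 := fbm_memLp hB _ p1
    have m2 := fbm_memLp hB _ p2
    have m3 := fbm_memLp hB _ p3
    have m4 := fbm_memLp hB _ p4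
    have i13 := m1.integrable_mul m3
    have i14 := m1.integrable_mul m4
    have i23 := m2.integrable_mul m3
    have i24 := m2.integrable_mul m4
    have c13 := hB.covariance _ _ p1 p3
    have c14 := hB.covariance _ _ p1 p4
    have c23 := hB.covariance _ _ p2 p3
    have c24 := hB.covariance _ _ p2 p4
    have e : ∀ ω, fInc B H n (l + r) ω * fInc B H n l ω = ((n:ℝ)^H * (n:ℝ)^H) *
      ((((B ((((l + r : ℕ) : ℝ) + 1) / n) * B (((l : ℝ) + 1) / n)) -
        (B ((((l + r : ℕ) : ℝ) + 1) / n) * B ((l : ℝ) / n))) -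
        (B (((l + r : ℕ) : ℝ) / n) * B (((l : ℝ) + 1) / n)) +
        (B (((l + r : ℕ) : ℝ) / n) * B ((l : ℝ) / n))) ω) := by
      intro ω
      simp only [fInc, Pi.add_apply, Pi.sub_apply, Pi.mul_apply]
      ring
    simp only [e]
    rw [integral_const_mul, integral_add' ((i13.sub i14).sub i23) i24,
      integral_sub' (i13.sub i14) i23, integral_sub' i13 i14]
    simp only [Pi.mul_apply, c13, c14, c23, c24]
    have a1 : |((l:ℝ) + 1) / n - (((l + r : ℕ) : ℝ) + 1) / n| = (r:ℝ) / n := by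
      rw [← sub_div, abs_div, abs_of_pos hn0]; push_cast
      congr 1
      rw [← abs_neg, abs_of_nonneg] <;> ring_nf; positivity
    have a2 : |(l:ℝ) / n - (((l + r : ℕ) : ℝ) + 1) / n| = ((r:ℝ) + 1) / n := by
      rw [← sub_div, abs_div, abs_of_pos hn0]; push_cast
      congr 1
      rw [← abs_neg, abs_of_nonneg] <;> ring_nf; positivity
    have a3 : |((l:ℝ) + 1) / n - ((l + r : ℕ) : ℝ) / n| = |(r:ℝ) - 1| / n := by
      rw [← sub_div, abs_div, abs_of_pos hn0]; push_cast
      congr 1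
      rw [← abs_neg]; ring_nf
    have a4 : |(l:ℝ) / n - ((l + r : ℕ) : ℝ) / n| = (r:ℝ) / n := by
      rw [← sub_div, abs_div, abs_of_pos hn0]; push_cast
      congr 1
      rw [← abs_neg, abs_of_nonneg] <;> ring_nf; positivity
    rw [a1, a2, a3, a4, Real.div_rpow (x := (r:ℝ)) (by positivity) hn0.le,
      Real.div_rpow (x := (r:ℝ) + 1) (by positivity) hn0.le,
      Real.div_rpow (x := |(r:ℝ) - 1|) (by positivity) hn0.le, ← Real.rpow_add hn0,
      ← two_mul, Nat.add_sub_cancel_left, fgnRho]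
    have : (n:ℝ) ^ (2 * H) ≠ 0 := (Real.rpow_pos_of_pos hn0 _).ne'
    field_simp
    ring
  rcases le_total l k with h | h
  · rw [key k l h]; congr 1; simp only [Nat.dist]; omega
  · have := key l k h
    simp only [mul_comm (fInc B H n k _)]
    rw [this]; congr 1; simp only [Nat.dist]; omega

lemma fInc_law {B : ℝ → Ω → ℝ} {H : ℝ} (hH : 0 < H) (hB : IsFractionalBrownianMotion B H)
    (n k : ℕ) (hn : 1 ≤ n) : Measure.map (fInc B H n k) ℙ = gaussianReal 0 1 := by
  obtain ⟨v, hv⟩ := fInc_comb hB n k k 1 0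
  simp only [one_mul, zero_mul, add_zero] at hv
  have hm := fInc_measurable hB n k
  have h1 := fInc_cov hB n k k hn
  rw [Nat.dist_self, fgnRho_zero H hH] at h1
  have := integral_map (μ := (ℙ : Measure Ω)) hm.aemeasurable (f := fun x : ℝ => x * x) (by fun_prop)
  rw [h1] at this
  have hv' : Measure.map (fInc B H n k) ℙ = gaussianReal 0 v := hv
  rw [hv'] at this
  have w := variance_fun_id_gaussianReal (μ := 0) (v := v)
  rw [variance_of_integral_eq_zero (by fun_prop) (by simp)] at w
  simp only [← pow_two] at this
  rw [this] at w
  have : v = 1 := by exact_mod_cast w.symm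
  rw [hv', this]

lemma fInc_joint {B : ℝ → Ω → ℝ} {H : ℝ} (hB : IsFractionalBrownianMotion B H)
    (n k l : ℕ) : HasGaussianLaw (fun ω => (fInc B H n k ω, fInc B H n l ω)) ℙ := by
  refine ⟨isGaussian_of_map_eq_gaussianReal fun L => ?_⟩
  obtain ⟨v, hv⟩ := fInc_comb hB n k l (L (1,0)) (L (0,1))
  refine ⟨0, v, ?_⟩
  have := fInc_measurable hB n k
  have := fInc_measurable hB n l
  rw [Measure.map_map (by fun_prop) (by fun_prop), ← hv]
  congr 1
  ext ω
  have : (fInc B H n k ω, fInc B H n l ω) =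
    fInc B H n k ω • ((1:ℝ),(0:ℝ)) + fInc B H n l ω • ((0:ℝ),(1:ℝ)) := by simp
  simp only [Function.comp_apply]
  rw [this, map_add, map_smul, map_smul]
  simp [mul_comm]

lemma hermiteVariation_eq (B : ℝ → Ω → ℝ) (H : ℝ) (q n : ℕ) (ω : Ω) :
    hermiteVariation B H q n ω = ∑ k ∈ Finset.range n,
      ((Polynomial.hermite q).map (algebraMap ℤ ℝ)).eval (fInc B H n k ω) := by
  simp only [hermiteVariation, Polynomial.eval_map_algebraMap, fInc]

lemma hermiteVariation_measurable {B : ℝ → Ω → ℝ} {H : ℝ} (hB : IsFractionalBrownianMotion B H)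
    (q n : ℕ) : Measurable (hermiteVariation B H q n) := by
  have : hermiteVariation B H q n = fun ω => ∑ k ∈ Finset.range n,
      ((Polynomial.hermite q).map (algebraMap ℤ ℝ)).eval (fInc B H n k ω) := by
    ext ω; exact hermiteVariation_eq B H q n ω
  rw [this]
  exact Finset.measurable_sum _ fun k _ =>
    ((Polynomial.hermite q).map (algebraMap ℤ ℝ)).continuous.measurable.comp (fInc_measurable hB n k)

lemma hermiteVariation_sq {B : ℝ → Ω → ℝ} {H : ℝ} (hH0 : 0 < H) (hH1 : H < 1)
    (hB : IsFractionalBrownianMotion B H) (q : ℕ) (hq : 1 ≤ q) :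
    ∃ C : ℝ, 0 ≤ C ∧ ∀ n : ℕ, 1 ≤ n →
      Integrable (fun ω => hermiteVariation B H q n ω ^ 2) (ℙ : Measure Ω) ∧
      ∫ ω, hermiteVariation B H q n ω ^ 2 ∂(ℙ : Measure Ω) ≤
        C * n * (n:ℝ) ^ (max (2 * H - 1) 0) := by
  set P := (Polynomial.hermite q).map (algebraMap ℤ ℝ) with hP
  obtain ⟨C, hC, h⟩ := cov_bound (ℙ : Measure Ω) P (by
    simpa only [hP, Polynomial.eval_map_algebraMap] using hermite_mean_zero q hq)
  refine ⟨4 * C, by positivity, fun n hn => ?_⟩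
  have e : ∀ ω, hermiteVariation B H q n ω ^ 2 = ∑ k ∈ Finset.range n, ∑ l ∈ Finset.range n,
      P.eval (fInc B H n k ω) * P.eval (fInc B H n l ω) := by
    intro ω
    rw [hermiteVariation_eq, pow_two, Finset.sum_mul_sum]
  have hi : ∀ k l, Integrable (fun ω => P.eval (fInc B H n k ω) * P.eval (fInc B H n l ω))
      (ℙ : Measure Ω) := fun k l =>
    (poly_memLp_two ℙ _ 1 (fInc_measurable hB n k) (fInc_law hH0 hB n k hn) P).integrable_mul
      (poly_memLp_two ℙ _ 1 (fInc_measurable hB n l) (fInc_law hH0 hB n l hn) P)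
  simp only [e]
  refine ⟨integrable_finsetSum _ fun k _ => integrable_finsetSum _ fun l _ => hi k l, ?_⟩
  rw [integral_finsetSum _ fun k _ => integrable_finsetSum _ fun l _ => hi k l]
  simp only [integral_finsetSum _ fun l _ => hi _ l]
  have hs := double_sum_dist (fun r => |fgnRho H r|) (fun r => abs_nonneg _) n
  have hr := fgnRho_sum H hH0 hH1 n hn
  calc _ ≤ ∑ k ∈ Finset.range n, ∑ l ∈ Finset.range n, C * |fgnRho H (Nat.dist k l)| := by
        refine Finset.sum_le_sum fun k _ => Finset.sum_le_sum fun l _ => ?_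
        refine (le_abs_self _).trans ?_
        rw [← fInc_cov hB n k l hn]
        exact h _ _ (fInc_measurable hB n k) (fInc_measurable hB n l) (fInc_joint hB n k l)
          (fInc_law hH0 hB n k hn) (fInc_law hH0 hB n l hn)
    _ = C * ∑ k ∈ Finset.range n, ∑ l ∈ Finset.range n, |fgnRho H (Nat.dist k l)| := by
        simp only [Finset.mul_sum]
    _ ≤ C * (2 * n * (2 * (n : ℝ) ^ (max (2 * H - 1) 0))) := by
        refine mul_le_mul_of_nonneg_left (hs.trans ?_) hC
        gcongr
    _ = _ := by ring
end fbm

lemma hasSum_ite_lt (f : ℕ → ℝ) (m : ℕ) :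
    HasSum (fun n => if n < m then f n else 0) (∑ n ∈ Finset.range m, f n) := by
  have := hasSum_sum_of_ne_finset_zero (f := fun n => if n < m then f n else 0)
    (s := Finset.range m) (L := SummationFilter.unconditional ℕ)
    (fun b hb => by simp at hb; simp [hb])
  convert! this using 1
  exact Finset.sum_congr rfl fun n hn => by simp [Finset.mem_range.1 hn]

lemma log_sum (D : ℝ → ℕ → ℝ) (C b : ℝ) (hC : 0 ≤ C) (hb : 0 < b)
    (h0 : ∀ e n, 0 < e → 0 ≤ D e n) (h1 : ∀ e n, 0 < e → D e n ≤ 1)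
    (h2 : ∀ e n, 0 < e → D e n ≤ C * ((n:ℝ) + 1) ^ (-b) / e ^ 2)
    (h3 : ∀ δ : ℝ, 0 < δ → ∃ η A : ℝ, 0 < η ∧ 0 < A ∧ ∃ n0 : ℕ, ∀ e n, 0 < e → n0 ≤ n →
      (e * √((n:ℝ) + 1) ≤ η ∨ A ≤ e * √((n:ℝ) + 1)) → D e n ≤ δ) :
    Tendsto (fun e : ℝ => 1 / (-Real.log e) * ∑' n : ℕ, 1 / ((n:ℝ) + 1) * D e n)
      (𝓝[>] 0) (𝓝 0) := by
  set K := 4 / b with hK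
  have hK0 : 0 < K := by positivity
  have hZs : Summable (fun n : ℕ => ((n:ℝ) + 1) ^ (-(1 + b/2))) := by
    have := (summable_nat_add_iff 1).2 (Real.summable_nat_rpow.2 (by linarith : -(1 + b/2) < -1))
    simpa using this
  set Z := ∑' n : ℕ, ((n:ℝ) + 1) ^ (-(1 + b/2)) with hZ
  have main : ∀ δ : ℝ, 0 < δ → ∃ R : ℝ, ∀ e : ℝ, 0 < e → e < 1 →
      ∑' n : ℕ, 1 / ((n:ℝ) + 1) * D e n ≤ R + δ * K * (-Real.log e) := by
    intro δ hδ
    obtain ⟨η, A, hη, hA, n0, h⟩ := h3 δ hδ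
    refine ⟨n0 + δ * (1 + Real.log 2) + (A^2 + 1) / η^2 + C * Z, fun e he he1 => ?_⟩
    have he2 : 0 < e ^ 2 := by positivity
    set M := ⌈e ^ (-K)⌉₊ with hM
    set M' := ⌈A^2 / e^2⌉₊ with hM'
    have hs := (((hasSum_ite_lt (fun _ => 1) n0).add
      (hasSum_ite_lt (fun n => δ * ((n:ℝ) + 1)⁻¹) M)).add
      (hasSum_ite_lt (fun _ => e^2 / η^2) M')).add (hZs.hasSum.mul_left C)
    have hpt : ∀ n : ℕ, 1 / ((n:ℝ) + 1) * D e n ≤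
        (if n < n0 then (1:ℝ) else 0) + (if n < M then δ * ((n:ℝ) + 1)⁻¹ else 0) +
        (if n < M' then e^2 / η^2 else 0) + C * ((n:ℝ) + 1) ^ (-(1 + b/2)) := by
      intro n
      have hN : (0:ℝ) < (n:ℝ) + 1 := by positivity
      have hN1 : 1 / ((n:ℝ) + 1) ≤ 1 := by rw [div_le_one hN]; linarith [(Nat.cast_nonneg n : (0:ℝ) ≤ n)]
      have hNi : 0 < 1 / ((n:ℝ) + 1) := by positivity
      have t1 : (0:ℝ) ≤ if n < n0 then (1:ℝ) else 0 := by split_ifs <;> norm_num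
      have t2 : (0:ℝ) ≤ if n < M then δ * ((n:ℝ) + 1)⁻¹ else 0 := by split_ifs <;> positivity
      have t3 : (0:ℝ) ≤ if n < M' then e^2 / η^2 else 0 := by split_ifs <;> positivity
      have t4 : 0 ≤ C * ((n:ℝ) + 1) ^ (-(1 + b/2)) := by positivity
      have d0 := h0 e n he
      have d1 := h1 e n he
      by_cases c1 : n < n0
      · have : 1 / ((n:ℝ) + 1) * D e n ≤ 1 := mul_le_one₀ hN1 d0 d1
        rw [if_pos c1]; linarith
      by_cases c2 : n < M
      swap
      · have c2' : e ^ (-K) ≤ (n:ℝ) + 1 := by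
          have := Nat.ceil_le.1 (not_lt.1 c2); linarith
        have e1 : ((n:ℝ) + 1) ^ (-(b/2)) ≤ e ^ 2 := by
          have := Real.rpow_le_rpow_of_nonpos (Real.rpow_pos_of_pos he _) c2'
            (by linarith : -(b/2) ≤ 0)
          rw [← Real.rpow_mul he.le] at this
          have e' : -K * -(b/2) = (2:ℕ) := by rw [hK]; field_simp; norm_num
          rwa [e', Real.rpow_natCast] at this
        have e2 : ((n:ℝ) + 1) ^ (-b) = ((n:ℝ) + 1) ^ (-(b/2)) * ((n:ℝ) + 1) ^ (-(b/2)) := by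
          rw [← Real.rpow_add hN]; ring_nf
        have e3 : ((n:ℝ) + 1) ^ (-(1 + b/2)) = 1 / ((n:ℝ)+1) * ((n:ℝ) + 1) ^ (-(b/2)) := by
          rw [neg_add, Real.rpow_add hN, Real.rpow_neg_one, one_div]
        have e4 : D e n ≤ C * ((n:ℝ) + 1) ^ (-(b/2)) := by
          refine (h2 e n he).trans ?_
          rw [div_le_iff₀ he2, e2]
          have : 0 ≤ ((n:ℝ) + 1) ^ (-(b/2)) := by positivity
          calc _ = C * ((n:ℝ) + 1) ^ (-(b/2)) * ((n:ℝ) + 1) ^ (-(b/2)) := by ring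
            _ ≤ _ := by gcongr
        have : 1 / ((n:ℝ) + 1) * D e n ≤ C * ((n:ℝ) + 1) ^ (-(1 + b/2)) := by
          rw [e3]
          calc _ ≤ 1 / ((n:ℝ) + 1) * (C * ((n:ℝ) + 1) ^ (-(b/2))) := by gcongr
            _ = _ := by ring
        linarith
      by_cases c3 : e * √((n:ℝ) + 1) ≤ η ∨ A ≤ e * √((n:ℝ) + 1)
      · have := h e n he (not_lt.1 c1) c3
        have : 1 / ((n:ℝ) + 1) * D e n ≤ δ * ((n:ℝ) + 1)⁻¹ := by
          rw [← one_div, mul_comm]; gcongr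
        rw [if_pos c2]; linarith
      · push Not at c3
        obtain ⟨c3, c4⟩ := c3
        have sq : (e * √((n:ℝ) + 1)) ^ 2 = e ^ 2 * ((n:ℝ) + 1) := by
          rw [mul_pow, Real.sq_sqrt hN.le]
        have s1 : η ^ 2 ≤ e ^ 2 * ((n:ℝ) + 1) := by rw [← sq]; gcongr
        have s2 : e ^ 2 * ((n:ℝ) + 1) ≤ A ^ 2 := by rw [← sq]; gcongr
        have c5 : n < M' := by
          rw [hM', Nat.lt_ceil, lt_div_iff₀ he2]; nlinarith
        have : 1 / ((n:ℝ) + 1) ≤ e ^ 2 / η ^ 2 := by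
          rw [div_le_div_iff₀ hN (by positivity)]; linarith
        have : 1 / ((n:ℝ) + 1) * D e n ≤ e ^ 2 / η ^ 2 := by
          calc _ ≤ 1 / ((n:ℝ) + 1) * 1 := by gcongr
            _ ≤ _ := by linarith
        rw [if_pos c5]; linarith
    have hsum : Summable (fun n : ℕ => 1 / ((n:ℝ) + 1) * D e n) :=
      Summable.of_nonneg_of_le (fun n => mul_nonneg (by positivity) (h0 e n he)) hpt hs.summable
    have hle := (hsum.tsum_le_tsum hpt hs.summable).trans_eq hs.tsum_eq
    rw [← hZ] at hle
    refine hle.trans ?_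
    have b1 : ∑ n ∈ Finset.range n0, (1:ℝ) = n0 := by simp
    have b2 : ∑ n ∈ Finset.range M, δ * ((n:ℝ) + 1)⁻¹ ≤
        δ * (1 + Real.log 2) + δ * K * (-Real.log e) := by
      rw [← Finset.mul_sum]
      have hh := harmonic_le_one_add_log M
      have hh2 : ((harmonic M : ℚ) : ℝ) = ∑ n ∈ Finset.range M, ((n:ℝ) + 1)⁻¹ := by
        simp [harmonic]
      rw [hh2] at hh
      have hek : 1 ≤ e ^ (-K) := Real.one_le_rpow_of_pos_of_le_one_of_nonpos he he1.le (by linarith)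
      have hM1 : (M:ℝ) ≤ 2 * e ^ (-K) := by
        have := Nat.ceil_lt_add_one (by positivity : 0 ≤ e ^ (-K)); linarith
      have hMp : (0:ℝ) < M := by
        have := Nat.le_ceil (e ^ (-K)); linarith
      have hl := Real.log_le_log hMp hM1
      rw [Real.log_mul (by norm_num) (by positivity), Real.log_rpow he] at hl
      have : ∑ n ∈ Finset.range M, ((n:ℝ) + 1)⁻¹ ≤ (1 + Real.log 2) + K * (-Real.log e) := by
        linarith
      calc _ ≤ δ * ((1 + Real.log 2) + K * (-Real.log e)) := by gcongr
        _ = _ := by ring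
    have b3 : ∑ n ∈ Finset.range M', e ^ 2 / η ^ 2 ≤ (A^2 + 1) / η^2 := by
      rw [Finset.sum_const, Finset.card_range, nsmul_eq_mul]
      have := Nat.ceil_lt_add_one (by positivity : 0 ≤ A^2 / e^2)
      have he3 : e ^ 2 ≤ 1 := by nlinarith
      rw [mul_div_assoc']
      gcongr
      calc (M':ℝ) * e ^ 2 ≤ (A^2/e^2 + 1) * e^2 := by gcongr
        _ = A ^ 2 + e ^ 2 := by field_simp
        _ ≤ _ := by linarith
    rw [b1]
    linarith
  have hlog : Tendsto (fun e : ℝ => -Real.log e) (𝓝[>] 0) atTop :=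
    tendsto_neg_atBot_atTop.comp Real.tendsto_log_nhdsGT_zero
  rw [Metric.tendsto_nhds]
  intro x hx
  obtain ⟨R, hR⟩ := main (x / (2 * K)) (by positivity)
  have hlim : Tendsto (fun e : ℝ => R / (-Real.log e)) (𝓝[>] 0) (𝓝 0) := hlog.const_div_atTop R
  have hev := hlim.eventually (gt_mem_nhds (by positivity : 0 < x/2))
  filter_upwards [hev, self_mem_nhdsWithin, Ioo_mem_nhdsGT (by norm_num : (0:ℝ) < 1)] with e e1 e2 e3
  have hl : 0 < -Real.log e := by have := Real.log_neg e3.1 e3.2; linarith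
  have hn : 0 ≤ ∑' n : ℕ, 1 / ((n:ℝ) + 1) * D e n :=
    tsum_nonneg fun n => mul_nonneg (by positivity) (h0 e n e3.1)
  rw [Real.dist_eq, sub_zero, abs_of_nonneg (by positivity)]
  calc _ ≤ 1 / (-Real.log e) * (R + x / (2 * K) * K * (-Real.log e)) := by
        gcongr; exact hR e e3.1 e3.2
    _ = R / (-Real.log e) + x / 2 := by
        generalize -Real.log e = L at hl
        field_simp
    _ < x := by linarith

lemma gauss_small (δ : ℝ) (hδ : 0 < δ) : ∃ η A : ℝ, 0 < η ∧ 0 < A ∧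
    gaussianReal 0 1 {y : ℝ | |y| ≤ η} < ENNReal.ofReal δ ∧
    gaussianReal 0 1 {y : ℝ | A ≤ |y|} < ENNReal.ofReal δ := by
  have hδ' : 0 < ENNReal.ofReal δ := by simpa using hδ
  have : NullSingletonClass (gaussianReal 0 1) := nullSingletonClass_gaussianReal (by norm_num)
  have h1 : ∃ η : ℝ, 0 < η ∧ gaussianReal 0 1 {y : ℝ | |y| ≤ η} < ENNReal.ofReal δ := by
    have := tendsto_measure_cthickening_of_isClosed (μ := gaussianReal 0 1) (s := {(0:ℝ)})
      ⟨1, by norm_num, by simp⟩ isClosed_singleton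
    rw [measure_singleton] at this
    have h := (this.mono_left (nhdsWithin_le_nhds (s := Set.Ioi 0))).eventually (gt_mem_nhds hδ')
    obtain ⟨η, hη, hp⟩ := (h.and self_mem_nhdsWithin).exists
    refine ⟨η, hp, ?_⟩
    rw [Metric.cthickening_singleton _ (le_of_lt hp)] at hη
    convert! hη using 2
    ext y; simp
  have h2 : ∃ A : ℝ, 0 < A ∧ gaussianReal 0 1 {y : ℝ | A ≤ |y|} < ENNReal.ofReal δ := by
    have ht := isTightMeasureSet_singleton (μ := gaussianReal 0 1)
    rw [isTightMeasureSet_iff_exists_isCompact_measure_compl_le] at ht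
    obtain ⟨K, hK, hle⟩ := ht (ENNReal.ofReal (δ/2)) (by simpa using hδ)
    obtain ⟨r, hr⟩ := hK.isBounded.subset_closedBall 0
    refine ⟨max r 0 + 1, by positivity, ?_⟩
    refine lt_of_le_of_lt ((measure_mono ?_).trans (hle _ rfl))
      ((ENNReal.ofReal_lt_ofReal_iff hδ).2 (by linarith))
    intro y hy hyK
    have := hr hyK
    simp at this hy
    have := le_max_left r 0
    linarith
  obtain ⟨η, hη, a⟩ := h1
  obtain ⟨A, hA, b⟩ := h2
  exact ⟨η, A, hη, hA, a, b⟩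

lemma weak_small {Ω : Type*} [MeasurableSpace Ω] (μ : Measure Ω) [IsProbabilityMeasure μ]
    (Z : ℕ → Ω → ℝ) (hZ : ∀ n, Measurable (Z n))
    (hconv : ∀ f : BoundedContinuousFunction ℝ ℝ,
      Tendsto (fun n => ∫ ω, f (Z n ω) ∂μ) atTop (𝓝 (∫ x, f x ∂(gaussianReal 0 1))))
    (F : Set ℝ) (hF : IsClosed F) (δ : ENNReal) (hδ : gaussianReal 0 1 F < δ) :
    ∃ n0 : ℕ, ∀ n, n0 ≤ n → μ {ω | Z n ω ∈ F} ≤ δ := by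
  set γ : ProbabilityMeasure ℝ := ⟨gaussianReal 0 1, inferInstance⟩
  set μs : ℕ → ProbabilityMeasure ℝ := fun n =>
    ⟨μ.map (Z n), Measure.isProbabilityMeasure_map (hZ n).aemeasurable⟩
  have ht : Tendsto μs atTop (𝓝 γ) := by
    rw [ProbabilityMeasure.tendsto_iff_forall_integral_tendsto]
    intro f
    refine (hconv f).congr fun n => ?_
    exact (integral_map (hZ n).aemeasurable
      (f.continuous.measurable.aestronglyMeasurable)).symm
  have hl := ProbabilityMeasure.limsup_measure_closed_le_of_tendsto ht hF
  have := eventually_lt_of_limsup_lt (lt_of_le_of_lt hl hδ)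
  obtain ⟨n0, h⟩ := eventually_atTop.1 this
  refine ⟨n0, fun n hn => ?_⟩
  have := (h n hn).le
  have e : (μs n : Measure ℝ) F = μ {ω | Z n ω ∈ F} := Measure.map_apply (hZ n) hF.measurableSet
  rwa [e] at this

lemma tail_side {α : Type*} [MeasurableSpace α] (μ : Measure α) [IsProbabilityMeasure μ]
    (X : α → ℝ) (hX : Measurable X) (η A δ x : ℝ) (hδ : 0 ≤ δ)
    (a1 : μ {ω | |X ω| ≤ η} ≤ ENNReal.ofReal δ) (a2 : μ {ω | A ≤ |X ω|} ≤ ENNReal.ofReal δ) :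
    (x ≤ η → 1 - δ ≤ (μ {ω | x < |X ω|}).toReal) ∧ (A ≤ x → (μ {ω | x < |X ω|}).toReal ≤ δ) ∧
      (μ {ω | x < |X ω|}).toReal ≤ 1 ∧ 0 ≤ (μ {ω | x < |X ω|}).toReal := by
  refine ⟨fun h => ?_, fun h => ?_, measureReal_le_one, ENNReal.toReal_nonneg⟩
  · have hm : MeasurableSet {ω | |X ω| ≤ x} := measurableSet_le (by fun_prop) (by fun_prop)
    have e : {ω | x < |X ω|} = {ω | |X ω| ≤ x}ᶜ := by ext ω; simp
    have := probReal_compl_eq_one_sub (μ := μ) hm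
    rw [e]
    change 1 - δ ≤ μ.real _
    rw [this]
    have : μ.real {ω | |X ω| ≤ x} ≤ δ := by
      refine ENNReal.toReal_le_of_le_ofReal hδ (le_trans (measure_mono ?_) a1)
      intro ω hω; exact le_trans hω h
    linarith
  · refine ENNReal.toReal_le_of_le_ofReal hδ (le_trans (measure_mono ?_) a2)
    intro ω hω; exact le_trans h (le_of_lt hω)

lemma compare_small {α β : Type*} [MeasurableSpace α] [MeasurableSpace β] (μ : Measure α)
    (ν : Measure β) [IsProbabilityMeasure μ] [IsProbabilityMeasure ν] (X : α → ℝ) (Y : β → ℝ)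
    (hX : Measurable X) (hY : Measurable Y) (η A δ : ℝ) (hδ : 0 ≤ δ)
    (a1 : μ {ω | |X ω| ≤ η} ≤ ENNReal.ofReal δ) (a2 : μ {ω | A ≤ |X ω|} ≤ ENNReal.ofReal δ)
    (b1 : ν {ω | |Y ω| ≤ η} ≤ ENNReal.ofReal δ) (b2 : ν {ω | A ≤ |Y ω|} ≤ ENNReal.ofReal δ)
    (x : ℝ) (hx : x ≤ η ∨ A ≤ x) :
    |(μ {ω | x < |X ω|}).toReal - (ν {ω | x < |Y ω|}).toReal| ≤ δ := by
  obtain ⟨p1, p2, p3, p4⟩ := tail_side μ X hX η A δ x hδ a1 a2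
  obtain ⟨q1, q2, q3, q4⟩ := tail_side ν Y hY η A δ x hδ b1 b2
  rw [abs_le]
  rcases hx with h | h
  · have := p1 h
    have := q1 h
    constructor <;> linarith
  · have := p2 h
    have := q2 h
    constructor <;> linarith

lemma cheb_tail {Ω : Type*} [MeasurableSpace Ω] (μ : Measure Ω) [IsProbabilityMeasure μ]
    (Z : Ω → ℝ) (hi : Integrable (fun ω => Z ω ^ 2) μ) (x : ℝ) (hx : 0 < x) :
    (μ {ω | x < |Z ω|}).toReal ≤ (∫ ω, Z ω ^ 2 ∂μ) / x ^ 2 := by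
  have h := mul_meas_ge_le_integral_of_nonneg (μ := μ)
    (Eventually.of_forall fun ω => sq_nonneg (Z ω)) hi (x ^ 2)
  rw [le_div_iff₀ (by positivity), mul_comm]
  refine le_trans ?_ h
  gcongr
  refine ENNReal.toReal_mono (measure_ne_top _ _) (measure_mono ?_)
  intro ω hω
  have hω' : x < |Z ω| := hω
  change x ^ 2 ≤ Z ω ^ 2
  rw [← sq_abs (Z ω)]
  gcongr

theorem stmt_4 {Ω : Type*} [MeasureSpace Ω] [IsProbabilityMeasure (ℙ : Measure Ω)]
    (q : ℕ) (hq : 2 ≤ q) (H : ℝ) (hH0 : 0 < H) (hH1 : H < 1 - 1 / (2 * q))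
    (B : ℝ → Ω → ℝ) (hB : IsFractionalBrownianMotion B H)
    (c₁ : ℝ) (hc₁ : 0 < c₁)
    (hconv : TendstoInDistribution
      (fun n ω => hermiteVariation B H q n ω / (c₁ * Real.sqrt n)) (gaussianReal 0 1))
    (N : Ω → ℝ) (hN : Measure.map N (ℙ : Measure Ω) = gaussianReal 0 1)
    (c : ℝ) (hc : 0 < c) :
    Tendsto
      (fun ε : ℝ =>
        (1 / (-Real.log (c * ε))) *
          ((∑' n : ℕ, (1 / ((n : ℝ) + 1)) *
              (ℙ {ω | c * ε * Real.sqrt ((n : ℝ) + 1) <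
                |hermiteVariation B H q (n + 1) ω / (c₁ * Real.sqrt ((n : ℝ) + 1))|}).toReal) -
            ∑' n : ℕ, (1 / ((n : ℝ) + 1)) *
              (ℙ {ω | c * ε * Real.sqrt ((n : ℝ) + 1) < |N ω|}).toReal))
      (𝓝[>] 0) (𝓝 0) := by
  have hq0 : (0:ℝ) < 2 * q := by positivity
  have hH1' : H < 1 := by
    have : 0 < 1 / (2 * (q:ℝ)) := by positivity
    linarith
  obtain ⟨C, hC, hV⟩ := hermiteVariation_sq hH0 hH1' hB q (by omega)
  set a := max (2 * H - 1) 0 with ha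
  have ha0 : 0 ≤ a := le_max_right _ _
  have ha1 : a < 1 := max_lt (by linarith) (by norm_num)
  set Z : ℕ → Ω → ℝ := fun n ω => hermiteVariation B H q n ω / (c₁ * Real.sqrt n) with hZdef
  have hZm : ∀ n, Measurable (Z n) := fun n =>
    (hermiteVariation_measurable hB q n).div_const _
  set γ := gaussianReal 0 1 with hγ
  set p : ℝ → ℕ → ℝ := fun e n =>
    (ℙ {ω | e * √((n:ℝ) + 1) < |Z (n+1) ω|}).toReal with hp
  set g : ℝ → ℕ → ℝ := fun e n => (γ {y | e * √((n:ℝ) + 1) < |y|}).toReal with hg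
  set C' := C / c₁ ^ 2 with hC'
  have hC'0 : 0 ≤ C' := by positivity
  have hsq : ∀ (e : ℝ) (n : ℕ), (e * √((n:ℝ) + 1)) ^ 2 = e ^ 2 * ((n:ℝ) + 1) := fun e n => by
    rw [mul_pow, Real.sq_sqrt (by positivity)]
  have pbound : ∀ e n, 0 < e → p e n ≤ C' * ((n:ℝ) + 1) ^ (-(1 - a)) / e ^ 2 := by
    intro e n he
    have hN : (0:ℝ) < (n:ℝ) + 1 := by positivity
    obtain ⟨hi, hle⟩ := hV (n+1) (by omega)
    have e1 : ∀ ω, Z (n+1) ω ^ 2 =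
        hermiteVariation B H q (n+1) ω ^ 2 * (1 / (c₁ ^ 2 * ((n:ℝ) + 1))) := by
      intro ω
      simp only [hZdef]
      push_cast
      rw [div_pow, mul_pow, Real.sq_sqrt hN.le]
      ring
    have hiZ : Integrable (fun ω => Z (n+1) ω ^ 2) (ℙ : Measure Ω) := by
      simp only [e1]; exact hi.mul_const _
    have hle2 : ∫ ω, Z (n+1) ω ^ 2 ∂(ℙ : Measure Ω) ≤ C' * ((n:ℝ) + 1) ^ a := by
      simp only [e1]
      rw [integral_mul_const]
      push_cast at hle
      calc _ ≤ C * ((n:ℝ) + 1) * ((n:ℝ) + 1) ^ a * (1 / (c₁ ^ 2 * ((n:ℝ) + 1))) := by gcongr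
        _ = _ := by rw [hC']; field_simp
    refine (cheb_tail ℙ (Z (n+1)) hiZ _ (by positivity)).trans ?_
    rw [hsq]
    have e2 : ((n:ℝ) + 1) ^ (-(1 - a)) = ((n:ℝ) + 1) ^ a / ((n:ℝ) + 1) := by
      rw [← Real.rpow_sub_one hN.ne']; ring_nf
    calc _ ≤ C' * ((n:ℝ) + 1) ^ a / (e ^ 2 * ((n:ℝ) + 1)) := by gcongr
      _ = _ := by rw [e2]; field_simp
  have gbound : ∀ e n, 0 < e → g e n ≤ 1 * ((n:ℝ) + 1) ^ (-(1 - a)) / e ^ 2 := by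
    intro e n he
    have hN : (0:ℝ) < (n:ℝ) + 1 := by positivity
    have hi : Integrable (fun y : ℝ => y ^ 2) γ := by
      have h := poly_integrable (Polynomial.X ^ 2) 1
      exact h.congr (Eventually.of_forall fun x => by simp)
    have h1 : ∫ y, y ^ 2 ∂γ = 1 := by
      have v := variance_fun_id_gaussianReal (μ := 0) (v := 1)
      rw [variance_of_integral_eq_zero (by fun_prop) (by simp)] at v
      simpa using v
    refine (cheb_tail γ (fun y => y) hi _ (by positivity)).trans ?_
    rw [hsq, h1, one_mul]
    have : ((n:ℝ) + 1)⁻¹ ≤ ((n:ℝ) + 1) ^ (-(1 - a)) := by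
      rw [← Real.rpow_neg_one]
      exact Real.rpow_le_rpow_of_exponent_le (by simp) (by linarith)
    calc 1 / (e ^ 2 * ((n:ℝ) + 1)) = ((n:ℝ) + 1)⁻¹ / e ^ 2 := by field_simp
      _ ≤ _ := by gcongr
  have p0 : ∀ e n, 0 ≤ p e n := fun e n => ENNReal.toReal_nonneg
  have g0 : ∀ e n, 0 ≤ g e n := fun e n => ENNReal.toReal_nonneg
  have p1 : ∀ e n, p e n ≤ 1 := fun e n => measureReal_le_one
  have g1 : ∀ e n, g e n ≤ 1 := fun e n => measureReal_le_one
  have hsummable : ∀ (f : ℝ → ℕ → ℝ) (K : ℝ), (∀ e n, 0 ≤ f e n) →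
      (∀ e n, 0 < e → f e n ≤ K * ((n:ℝ) + 1) ^ (-(1 - a)) / e ^ 2) → ∀ e, 0 < e →
      Summable (fun n : ℕ => 1 / ((n:ℝ) + 1) * f e n) := by
    intro f K hf0 hf e he
    have hs : Summable (fun n : ℕ => ((n:ℝ) + 1) ^ (-(1 + (1 - a)))) := by
      have := (summable_nat_add_iff 1).2
        (Real.summable_nat_rpow.2 (by linarith : -(1 + (1 - a)) < -1))
      simpa using this
    refine Summable.of_nonneg_of_le (fun n => mul_nonneg (by positivity) (hf0 e n))
      (fun n => ?_) (hs.mul_left (K / e ^ 2))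
    have hN : (0:ℝ) < (n:ℝ) + 1 := by positivity
    rw [neg_add, Real.rpow_add hN, Real.rpow_neg_one]
    calc _ ≤ 1 / ((n:ℝ) + 1) * (K * ((n:ℝ) + 1) ^ (-(1 - a)) / e ^ 2) := by
          gcongr; exact hf e n he
      _ = _ := by ring
  have key := log_sum (fun e n => |p e n - g e n|) (C' + 1) (1 - a) (by positivity) (by linarith)
    (fun e n _ => abs_nonneg _)
    (fun e n _ => by
      have := p0 e n; have := p1 e n; have := g0 e n; have := g1 e n
      exact abs_le.2 ⟨by linarith, by linarith⟩)
    (fun e n he => by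
      have h1 := pbound e n he
      have h2 := gbound e n he
      have := p0 e n; have := g0 e n
      have e1 : (C' + 1) * ((n:ℝ) + 1) ^ (-(1 - a)) / e ^ 2 =
        C' * ((n:ℝ) + 1) ^ (-(1 - a)) / e ^ 2 + 1 * ((n:ℝ) + 1) ^ (-(1 - a)) / e ^ 2 := by ring
      rw [e1]
      exact abs_le.2 ⟨by linarith, by linarith⟩)
    (by
      intro δ hδ
      obtain ⟨η, A, hη, hA, b1, b2⟩ := gauss_small δ hδ
      obtain ⟨n1, h1⟩ := weak_small ℙ Z hZm hconv {y | |y| ≤ η}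
        (isClosed_le continuous_abs continuous_const) _ b1
      obtain ⟨n2, h2⟩ := weak_small ℙ Z hZm hconv {y | A ≤ |y|}
        (isClosed_le continuous_const continuous_abs) _ b2
      refine ⟨η, A, hη, hA, n1 + n2, fun e n he hn hx => ?_⟩
      exact compare_small ℙ γ (Z (n+1)) (fun y => y) (hZm _) measurable_id η A δ hδ.le
        (h1 _ (by omega)) (h2 _ (by omega)) b1.le b2.le _ hx)
  have hNae : AEMeasurable N (ℙ : Measure Ω) := by
    apply AEMeasurable.of_map_ne_zero
    rw [hN]
    exact IsProbabilityMeasure.ne_zero _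
  have hNg : ∀ (e : ℝ) (n : ℕ), (ℙ {ω | e * √((n:ℝ) + 1) < |N ω|}).toReal = g e n := by
    intro e n
    simp only [hg]
    rw [← hN, Measure.map_apply_of_aemeasurable hNae
      (measurableSet_lt measurable_const (by fun_prop))]
    rfl
  have hcomp : Tendsto (fun ε : ℝ => c * ε) (𝓝[>] 0) (𝓝[>] 0) := by
    refine tendsto_nhdsWithin_iff.2 ⟨?_, ?_⟩
    · have : Tendsto (fun ε : ℝ => c * ε) (𝓝 0) (𝓝 (c * 0)) := tendsto_id.const_mul c
      rw [mul_zero] at this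
      exact this.mono_left nhdsWithin_le_nhds
    · filter_upwards [self_mem_nhdsWithin] with ε hε
      exact mul_pos hc hε
  have key2 := key.comp hcomp
  refine squeeze_zero_norm' ?_ key2
  have h1 : ∀ᶠ e : ℝ in 𝓝[>] 0, e < 1 := nhdsWithin_le_nhds (gt_mem_nhds (by norm_num))
  filter_upwards [self_mem_nhdsWithin, hcomp.eventually h1] with ε hε hε1
  have he : 0 < c * ε := mul_pos hc hε
  have hl : 0 < -Real.log (c * ε) := by have := Real.log_neg he hε1; linarith
  have hpe : ∀ n : ℕ, (ℙ {ω | c * ε * Real.sqrt ((n : ℝ) + 1) <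
      |hermiteVariation B H q (n + 1) ω / (c₁ * Real.sqrt ((n : ℝ) + 1))|}).toReal = p (c * ε) n := by
    intro n
    simp only [hp, hZdef]
    push_cast
    rfl
  simp only [hNg, hpe, Function.comp_apply]
  have sp := hsummable p C' p0 pbound (c * ε) he
  have sg := hsummable g 1 g0 gbound (c * ε) he
  rw [← sp.tsum_sub sg, norm_mul, Real.norm_of_nonneg (by positivity)]
  refine mul_le_mul_of_nonneg_left ?_ (by positivity)
  have hsub := (sp.sub sg).abs
  have hno : ∀ n : ℕ, |1 / ((n:ℝ) + 1) * p (c * ε) n - 1 / ((n:ℝ) + 1) * g (c * ε) n| =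
      1 / ((n:ℝ) + 1) * |p (c * ε) n - g (c * ε) n| := by
    intro n
    rw [← mul_sub, abs_mul, abs_of_nonneg (by positivity : (0:ℝ) ≤ 1 / ((n:ℝ) + 1))]
  have := norm_tsum_le_tsum_norm (f := fun n : ℕ =>
    1 / ((n:ℝ) + 1) * p (c * ε) n - 1 / ((n:ℝ) + 1) * g (c * ε) n) hsub
  simpa only [Real.norm_eq_abs, hno] using this
end

section
/- Let q ≥ 2 be an integer, 1 − 1/(2q) < H < 1, let c_{2,q,H} > 0 be the constant for which Z_n := V_n/(c_{2,q,H} n^{1−q(1−H)}) converges in L²(Ω) to a random variable Z with E Z² = 1. Then for every c > 0, (1/(−log(cε))) · [ Σ_{n≥1} (1/n) P(|Z_n| > c ε n^{1−q(1−H)}) − Σ_{n≥1} (1/n) P(|Z| > c ε n^{1−q(1−H)}) ] converges to 0 as ε → 0⁺. -/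
open MeasureTheory ProbabilityTheory Filter Real Topology

lemma poly_const (q N : ℕ) : ∃ C : ℝ, 0 < C ∧ ∀ Q : Polynomial ℝ, Q.natDegree ≤ 2 * q →
    ∀ S ⊆ Finset.range N, 2 * q < S.card → ∀ t : ℝ, (∀ i ∈ S, |Q.eval (i : ℝ)| ≤ t) →
    |Q.eval 0| ≤ C * t ∧ |Q.eval 1| ≤ C * t := by
  let b : Finset ℕ → ℕ → ℝ → ℝ := fun S i x => |(Lagrange.basis S (fun i : ℕ => (i : ℝ)) i).eval x|
  let K : ℝ → ℝ := fun x => ∑ S ∈ (Finset.range N).powerset, ∑ i ∈ S, b S i x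
  have hK : ∀ x, 0 ≤ K x := fun x => Finset.sum_nonneg fun S _ => Finset.sum_nonneg fun i _ =>
    abs_nonneg _
  have key : ∀ x : ℝ, ∀ Q : Polynomial ℝ, Q.natDegree ≤ 2 * q →
    ∀ S ⊆ Finset.range N, 2 * q < S.card → ∀ t : ℝ, (∀ i ∈ S, |Q.eval (i : ℝ)| ≤ t) →
    |Q.eval x| ≤ K x * t := by
    intro x Q hQ S hS hcard t ht
    have ht0 : 0 ≤ t := by
      obtain ⟨i, hi⟩ := Finset.card_pos.mp (by omega : 0 < S.card)
      exact (abs_nonneg _).trans (ht i hi)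
    have hdeg : Q.degree < S.card := by
      refine lt_of_le_of_lt Polynomial.degree_le_natDegree ?_
      exact_mod_cast lt_of_le_of_lt hQ hcard
    have h := Lagrange.eq_interpolate (s := S) (v := fun i : ℕ => (i : ℝ))
      (Nat.cast_injective.injOn) hdeg
    rw [h, Lagrange.interpolate_apply, Polynomial.eval_finsetSum]
    calc |∑ i ∈ S, _| ≤ ∑ i ∈ S, t * b S i x := by
          refine (Finset.abs_sum_le_sum_abs _ _).trans (Finset.sum_le_sum fun i hi => ?_)
          rw [Polynomial.eval_mul, Polynomial.eval_C, abs_mul]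
          exact mul_le_mul_of_nonneg_right (ht i hi) (abs_nonneg _)
      _ = (∑ i ∈ S, b S i x) * t := by rw [← Finset.mul_sum, mul_comm]
      _ ≤ K x * t := by
          refine mul_le_mul_of_nonneg_right ?_ ht0
          exact Finset.single_le_sum (f := fun S => ∑ i ∈ S, b S i x)
            (fun S _ => Finset.sum_nonneg fun i _ => abs_nonneg _) (Finset.mem_powerset.mpr hS)
  refine ⟨1 + K 0 + K 1, by linarith [hK 0, hK 1], fun Q hQ S hS hc t ht => ?_⟩
  have ht0 : 0 ≤ t := by
      obtain ⟨i, hi⟩ := Finset.card_pos.mp (by omega : 0 < S.card)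
      exact (abs_nonneg _).trans (ht i hi)
  have h0 := key 0 Q hQ S hS hc t ht
  have h1 := key 1 Q hQ S hS hc t ht
  constructor
  · nlinarith [hK 0, hK 1, mul_nonneg (hK 0) ht0, mul_nonneg (hK 1) ht0]
  · nlinarith [hK 0, hK 1, mul_nonneg (hK 0) ht0, mul_nonneg (hK 1) ht0]

/-- homogenization along the rational parametrization of the circle -/
lemma exists_poly (q : ℕ) (P : Polynomial ℤ) (hP : P.natDegree ≤ q) (x y : ℝ) :
    ∃ Q : Polynomial ℝ, Q.natDegree ≤ 2 * q ∧ ∀ s : ℝ, Q.eval s =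
      (1 + s ^ 2) ^ q * Polynomial.aeval ((1 - s ^ 2) / (1 + s ^ 2) * x
        + (2 * s) / (1 + s ^ 2) * y) P := by
  refine ⟨∑ i ∈ Finset.range (q + 1), Polynomial.C (P.coeff i : ℝ) *
    ((1 + Polynomial.X ^ 2) ^ (q - i) * ((1 - Polynomial.X ^ 2) * Polynomial.C x
      + 2 * Polynomial.X * Polynomial.C y) ^ i), ?_, ?_⟩
  · refine Polynomial.natDegree_sum_le_of_forall_le _ _ fun i hi => ?_
    have hi' : i ≤ q := by simpa [Nat.lt_succ_iff] using hi
    have h1 : (1 + Polynomial.X ^ 2 : Polynomial ℝ).natDegree ≤ 2 := by compute_degree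
    have h2 : ((1 - Polynomial.X ^ 2) * Polynomial.C x
      + 2 * Polynomial.X * Polynomial.C y : Polynomial ℝ).natDegree ≤ 2 := by
      compute_degree
    refine (Polynomial.natDegree_C_mul_le _ _).trans (Polynomial.natDegree_mul_le.trans ?_)
    have h3 := Polynomial.natDegree_pow_le_of_le (q - i) h1
    have h4 := Polynomial.natDegree_pow_le_of_le i h2
    omega
  · intro s
    have hs : (1 + s ^ 2) ≠ 0 := by positivity
    rw [Polynomial.aeval_eq_sum_range' (n := q + 1) (by omega), Polynomial.eval_finsetSum,
      Finset.mul_sum]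
    refine Finset.sum_congr rfl fun i hi => ?_
    have hi' : i ≤ q := by simpa [Nat.lt_succ_iff] using hi
    have e : (1 - s ^ 2) / (1 + s ^ 2) * x + (2 * s) / (1 + s ^ 2) * y
      = ((1 - s ^ 2) * x + 2 * s * y) / (1 + s ^ 2) := by field_simp
    rw [e, div_pow]
    obtain ⟨j, rfl⟩ := Nat.exists_eq_add_of_le hi'
    simp only [Polynomial.eval_mul, Polynomial.eval_add, Polynomial.eval_sub, Polynomial.eval_pow,
      Polynomial.eval_C, Polynomial.eval_X, Polynomial.eval_one, Polynomial.eval_ofNat,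
      Nat.add_sub_cancel_left, zsmul_eq_mul, pow_add]
    field_simp

lemma exists_angle (s : ℝ) : ∃ θ : ℝ, cos θ = (1 - s ^ 2) / (1 + s ^ 2) ∧
    sin θ = (2 * s) / (1 + s ^ 2) := by
  have h : 0 < 1 + s ^ 2 := by positivity
  have h2 : √(1 + s ^ 2) * √(1 + s ^ 2) = 1 + s ^ 2 := Real.mul_self_sqrt h.le
  have h3 : √(1 + s ^ 2) ≠ 0 := by positivity
  refine ⟨2 * arctan s, ?_, ?_⟩
  · rw [cos_two_mul, cos_sq_arctan]; field_simp; ring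
  · rw [sin_two_mul, sin_arctan, cos_arctan]
    rw [eq_div_iff h.ne']
    calc _ = 2 * s * (1 + s ^ 2) / (√(1 + s ^ 2) * √(1 + s ^ 2)) := by field_simp
      _ = 2 * s := by rw [h2]; field_simp

lemma partial_bound (d K τ η : ℝ) (hd : 1 / 2 < d) (hK : 0 ≤ K) (hτ : 0 < τ) (hη : 0 ≤ η) (m₁ : ℕ)
    (a : ℝ) (ha : 0 < a) (haτ : a ≤ τ) (D : ℕ → ℝ) 
    (h1 : ∀ n, D n ≤ 1)
    (h2 : ∀ n, m₁ ≤ n → a * ((n : ℝ) + 1) ^ d ≤ τ → D n ≤ η)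
    (h3 : ∀ n, m₁ ≤ n → D n ≤ K / (a * ((n : ℝ) + 1) ^ d) ^ 2) (L : ℕ) :
    ∑ n ∈ Finset.range L, (1 / ((n : ℝ) + 1)) * D n ≤
      m₁ + η * (1 + (log τ - log a) / d) + 2 * K / τ ^ 2 := by
  set M : ℝ := (τ / a) ^ (1 / d) with hM
  have hd0 : 0 < d := by linarith
  have hτa : 1 ≤ τ / a := (one_le_div ha).mpr haτ
  have hM1 : 1 ≤ M := Real.one_le_rpow hτa (by positivity)
  have hM0 : 0 < M := by linarith
  have hMd : M ^ d = τ / a := by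
    rw [hM, ← Real.rpow_mul (by positivity), one_div_mul_cancel hd0.ne', Real.rpow_one]
  have hlogM : log M = (log τ - log a) / d := by
    rw [hM, Real.log_rpow (by positivity), Real.log_div hτ.ne' ha.ne']; ring
  set k := ⌊M⌋₊ with hk
  have hkM : (k : ℝ) ≤ M := Nat.floor_le hM0.le
  have hMk : M < k + 1 := Nat.lt_floor_add_one M
  -- pointwise
  have hpt : ∀ n : ℕ, (1 / ((n : ℝ) + 1)) * D n ≤ (if n < m₁ then (1:ℝ) else 0)
      + (if n < k then η * (1 / ((n:ℝ) + 1)) else 0)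
      + (if k ≤ n then K * M / τ ^ 2 * (((n + 1 : ℕ) : ℝ) ^ 2)⁻¹ else 0) := by
    intro n
    have hn : (0:ℝ) < (n:ℝ) + 1 := by positivity
    have hn1 : 1 / ((n : ℝ) + 1) ≤ 1 := by rw [div_le_one hn]; linarith [n.cast_nonneg (α := ℝ)]
    have hn0 : 0 ≤ 1 / ((n : ℝ) + 1) := by positivity
    have A1 : 0 ≤ (if n < m₁ then (1:ℝ) else 0) := by split_ifs <;> norm_num
    have A2 : 0 ≤ (if n < k then η * (1 / ((n:ℝ) + 1)) else 0) := by split_ifs <;> positivity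
    have A3 : 0 ≤ (if k ≤ n then K * M / τ ^ 2 * (((n + 1 : ℕ) : ℝ) ^ 2)⁻¹ else 0) := by
      split_ifs <;> positivity
    by_cases c1 : n < m₁
    · have : (1 / ((n : ℝ) + 1)) * D n ≤ 1 := by nlinarith [h1 n]
      simp only [c1, if_true]
      linarith
    push Not at c1
    by_cases c2 : n < k
    · have hle : a * ((n : ℝ) + 1) ^ d ≤ τ := by
        have : (n : ℝ) + 1 ≤ M := by
          refine le_trans ?_ hkM
          exact_mod_cast c2
        have := Real.rpow_le_rpow hn.le this hd0.le
        rw [hMd, le_div_iff₀ ha] at this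
        linarith
      have := mul_le_mul_of_nonneg_left (h2 n c1 hle) hn0
      simp only [c2, if_true]
      linarith
    push Not at c2
    have hge : M ≤ (n : ℝ) + 1 := by
      refine hMk.le.trans ?_
      have : (k:ℝ) ≤ n := by exact_mod_cast c2
      linarith
    have := mul_le_mul_of_nonneg_left (h3 n c1) hn0
    have key : (1 / ((n : ℝ) + 1)) * (K / (a * ((n : ℝ) + 1) ^ d) ^ 2) ≤
        K * M / τ ^ 2 * (((n + 1 : ℕ) : ℝ) ^ 2)⁻¹ := by
      push_cast
      set x := (n : ℝ) + 1 with hx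
      -- (x/M)^(2d) ≥ x/M
      have hxM : 1 ≤ x / M := (one_le_div hM0).mpr hge
      have h4 : x / M ≤ ((x / M) ^ d) ^ 2 := by
        rw [← Real.rpow_natCast, ← Real.rpow_mul (by positivity)]
        calc x / M = (x / M) ^ (1:ℝ) := (Real.rpow_one _).symm
          _ ≤ _ := Real.rpow_le_rpow_of_exponent_le hxM (by push_cast; linarith)
      rw [Real.div_rpow hn.le hM0.le, hMd] at h4
      have h5 : x ^ d / (τ / a) = a * x ^ d / τ := by field_simp
      rw [h5, div_pow, div_le_div_iff₀ hM0 (by positivity)] at h4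
      have hxd : 0 < x ^ d := Real.rpow_pos_of_pos hn d
      rw [← div_eq_mul_inv, div_div, one_div_mul_eq_div, div_div, div_le_div_iff₀ (by positivity) (by positivity)]
      calc K * (τ ^ 2 * x ^ 2) = K * x * (x * τ ^ 2) := by ring
        _ ≤ K * x * ((a * x ^ d) ^ 2 * M) := by gcongr
        _ = _ := by ring
    have c2' : k ≤ n := c2
    simp only [c2', if_true]
    linarith
  refine (Finset.sum_le_sum fun n _ => hpt n).trans ?_
  rw [Finset.sum_add_distrib, Finset.sum_add_distrib]
  have B1 : ∑ n ∈ Finset.range L, (if n < m₁ then (1:ℝ) else 0) ≤ m₁ := by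
    rw [← Finset.sum_filter, Finset.sum_const, nsmul_eq_mul, mul_one]
    have : ((Finset.range L).filter (· < m₁)).card ≤ (Finset.range m₁).card :=
      Finset.card_le_card fun i hi => by simp at hi ⊢; exact hi.2
    rw [Finset.card_range] at this
    exact_mod_cast this
  have B2 : ∑ n ∈ Finset.range L, (if n < k then η * (1 / ((n:ℝ) + 1)) else 0) ≤
      η * (1 + (log τ - log a) / d) := by
    rw [← Finset.sum_filter, ← Finset.mul_sum]
    refine mul_le_mul_of_nonneg_left ?_ hη
    rw [← hlogM]
    refine le_trans ?_ (harmonic_floor_le_one_add_log M hM1)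
    rw [← hk, harmonic]
    push_cast
    calc _ ≤ ∑ n ∈ Finset.range k, 1 / ((n:ℝ) + 1) := by
          refine Finset.sum_le_sum_of_subset_of_nonneg ?_ (fun i _ _ => by positivity)
          intro i hi; simp at hi ⊢; exact hi.2
      _ = _ := by simp
  have B3 : ∑ n ∈ Finset.range L, (if k ≤ n then K * M / τ ^ 2 * (((n + 1 : ℕ) : ℝ) ^ 2)⁻¹ else 0)
      ≤ 2 * K / τ ^ 2 := by
    rw [← Finset.sum_filter, ← Finset.mul_sum]
    have : ∑ n ∈ (Finset.range L).filter (k ≤ ·), (((n + 1 : ℕ) : ℝ) ^ 2)⁻¹ ≤ 2 / ((k:ℝ) + 1) := by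
      refine le_trans (le_of_eq ?_) (sum_Ioo_inv_sq_le k (L + 1))
      refine Finset.sum_bij (fun n _ => n + 1) ?_ ?_ ?_ ?_
      · intro n hn; simp at hn ⊢; omega
      · intro _ _ _ _ h; omega
      · intro b hb; simp at hb; exact ⟨b - 1, by simp; omega, by omega⟩
      · intros; rfl
    calc _ ≤ K * M / τ ^ 2 * (2 / M) := by
          refine mul_le_mul_of_nonneg_left (this.trans ?_) (by positivity)
          gcongr
      _ = _ := by field_simp
  linarith

lemma summable_aux (d K a : ℝ) (hd : 1 / 2 < d) (ha : 0 < a) (hK : 0 ≤ K) (F : ℕ → ℝ) (m₁ : ℕ)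
    (h0 : ∀ n, 0 ≤ F n)
    (h3 : ∀ n, m₁ ≤ n → F n ≤ K / (a * ((n : ℝ) + 1) ^ d) ^ 2) :
    Summable fun n : ℕ => (1 / ((n : ℝ) + 1)) * F n := by
  have hs : Summable fun n : ℕ => K / a ^ 2 * (1 / ((n + 1 : ℕ) : ℝ) ^ 2) :=
    ((summable_nat_add_iff 1).mpr (Real.summable_one_div_nat_pow.mpr one_lt_two)).mul_left _
  refine Summable.of_norm_bounded_eventually_nat hs ?_
  filter_upwards [eventually_ge_atTop m₁] with n hn
  have hx : (1:ℝ) ≤ (n : ℝ) + 1 := by linarith [n.cast_nonneg (α := ℝ)]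
  push_cast
  have := h3 n hn
  set x := (n : ℝ) + 1
  have hx0 : 0 < x := by linarith
  rw [Real.norm_of_nonneg (mul_nonneg (by positivity) (h0 n))]
  refine (mul_le_mul_of_nonneg_left this (by positivity)).trans ?_
  have h4 : x ≤ (x ^ d) ^ 2 := by
    rw [← Real.rpow_natCast, ← Real.rpow_mul (by positivity)]
    calc x = x ^ (1:ℝ) := (Real.rpow_one _).symm
      _ ≤ _ := Real.rpow_le_rpow_of_exponent_le hx (by push_cast; linarith)
  have hxd : 0 < x ^ d := Real.rpow_pos_of_pos hx0 d
  rw [mul_pow, one_div_mul_eq_div, div_div, mul_one_div, div_div]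
  refine div_le_div_of_nonneg_left hK (by positivity) ?_
  calc a ^ 2 * x ^ 2 = a ^ 2 * x * x := by ring
    _ ≤ a ^ 2 * (x ^ d) ^ 2 * x := by gcongr
    _ = _ := by ring

lemma analytic (d K : ℝ) (hd : 1 / 2 < d) (hK : 0 ≤ K) (F : ℕ → ℝ → ℝ) (G : ℝ → ℝ)
    (hF0 : ∀ n t, 0 ≤ F n t) (hF1 : ∀ n t, F n t ≤ 1)
    (hG0 : ∀ t, 0 ≤ G t) (hG1 : ∀ t, G t ≤ 1)
    (m₀ : ℕ) (hFK : ∀ n, m₀ ≤ n → ∀ t, 0 < t → F n t ≤ K / t ^ 2)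
    (hGK : ∀ t, 0 < t → G t ≤ K / t ^ 2)
    (hη : ∀ η, 0 < η → ∃ τ, 0 < τ ∧ ∃ m₁ : ℕ, (∀ t, t ≤ τ → 1 - G t ≤ η) ∧
      ∀ n, m₁ ≤ n → ∀ t, t ≤ τ → 1 - F n t ≤ η) (c : ℝ) (hc : 0 < c) :
    Tendsto (fun ε : ℝ => (1 / (-log (c * ε))) *
      ((∑' n : ℕ, (1 / ((n : ℝ) + 1)) * F n (c * ε * ((n : ℝ) + 1) ^ d)) -
        ∑' n : ℕ, (1 / ((n : ℝ) + 1)) * G (c * ε * ((n : ℝ) + 1) ^ d))) (𝓝[>] 0) (𝓝 0) := by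
  have ht : Tendsto (fun ε : ℝ => c * ε) (𝓝[>] 0) (𝓝[>] 0) := by
    refine tendsto_nhdsWithin_iff.mpr ⟨?_, ?_⟩
    · have : Tendsto (fun ε : ℝ => c * ε) (𝓝 0) (𝓝 (c * 0)) := tendsto_id.const_mul c
      rw [mul_zero] at this
      exact this.mono_left nhdsWithin_le_nhds
    · filter_upwards [self_mem_nhdsWithin] with ε hε
      exact mul_pos hc hε
  suffices h : Tendsto (fun a : ℝ => (1 / (-log a)) *
      ((∑' n : ℕ, (1 / ((n : ℝ) + 1)) * F n (a * ((n : ℝ) + 1) ^ d)) -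
        ∑' n : ℕ, (1 / ((n : ℝ) + 1)) * G (a * ((n : ℝ) + 1) ^ d))) (𝓝[>] 0) (𝓝 0) from
    h.comp ht
  have hd0 : 0 < d := by linarith
  rw [Metric.tendsto_nhds]
  intro e he
  obtain ⟨τ, hτ, m₁, hGτ, hFτ⟩ := hη (e * d / 2) (by positivity)
  set η := e * d / 2 with hηdef
  have hη0 : 0 < η := by positivity
  set m := max m₀ m₁
  set R : ℝ := m + η * (1 + log τ / d) + 2 * K / τ ^ 2 with hR
  have hlog : Tendsto (fun a : ℝ => -log a) (𝓝[>] 0) atTop :=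
    tendsto_neg_atBot_atTop.comp Real.tendsto_log_nhdsGT_zero
  filter_upwards [self_mem_nhdsWithin, hlog.eventually_gt_atTop 0,
    hlog.eventually_gt_atTop (R / (e / 2)),
    (nhdsWithin_le_nhds (Iio_mem_nhds hτ) : Set.Iio τ ∈ 𝓝[>] (0:ℝ))] with a ha hl0 hl haτ
  have ha : 0 < a := ha
  have hpos : ∀ n : ℕ, 0 < a * ((n : ℝ) + 1) ^ d := fun n => by positivity
  have sF : Summable fun n : ℕ => (1 / ((n : ℝ) + 1)) * F n (a * ((n : ℝ) + 1) ^ d) :=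
    summable_aux d K a hd ha hK _ m₀ (fun n => hF0 _ _) (fun n hn => hFK n hn _ (hpos n))
  have sG : Summable fun n : ℕ => (1 / ((n : ℝ) + 1)) * G (a * ((n : ℝ) + 1) ^ d) :=
    summable_aux d K a hd ha hK _ 0 (fun n => hG0 _) (fun n hn => hGK _ (hpos n))
  rw [← sF.tsum_sub sG]
  have hpb := partial_bound d K τ η hd hK hτ hη0.le m a ha (le_of_lt haτ)
    (fun n => |F n (a * ((n : ℝ) + 1) ^ d) - G (a * ((n : ℝ) + 1) ^ d)|)
    (fun n => abs_le.mpr ⟨by linarith [hF0 n (a * ((n : ℝ) + 1) ^ d), hG1 (a * ((n : ℝ) + 1) ^ d)],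
      by linarith [hF1 n (a * ((n : ℝ) + 1) ^ d), hG0 (a * ((n : ℝ) + 1) ^ d)]⟩)
    (fun n hn h => by
      have e1 := hGτ _ h
      have e2 := hFτ n ((le_max_right _ _).trans hn) _ h
      have e3 := hF1 n (a * ((n : ℝ) + 1) ^ d)
      have e4 := hG1 (a * ((n : ℝ) + 1) ^ d)
      exact abs_le.mpr ⟨by linarith, by linarith⟩)
    (fun n hn => by
      have e1 := hGK _ (hpos n)
      have e2 := hFK n ((le_max_left _ _).trans hn) _ (hpos n)
      have e3 := hF0 n (a * ((n : ℝ) + 1) ^ d)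
      have e4 := hG0 (a * ((n : ℝ) + 1) ^ d)
      exact abs_le.mpr ⟨by linarith, by linarith⟩)
  have hb : |∑' n : ℕ, ((1 / ((n : ℝ) + 1)) * F n (a * ((n : ℝ) + 1) ^ d) -
      (1 / ((n : ℝ) + 1)) * G (a * ((n : ℝ) + 1) ^ d))| ≤
      m + η * (1 + (log τ - log a) / d) + 2 * K / τ ^ 2 := by
    have hnn : ∀ n : ℕ, 0 ≤ (1 / ((n : ℝ) + 1)) *
      |F n (a * ((n : ℝ) + 1) ^ d) - G (a * ((n : ℝ) + 1) ^ d)| := fun n => by positivity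
    have hs := summable_of_sum_range_le hnn hpb
    have := tsum_of_norm_bounded (f := fun n : ℕ => (1 / ((n : ℝ) + 1)) * F n (a * ((n : ℝ) + 1) ^ d) -
      (1 / ((n : ℝ) + 1)) * G (a * ((n : ℝ) + 1) ^ d)) hs.hasSum (fun n => by
        rw [← mul_sub, norm_mul, Real.norm_of_nonneg (by positivity : 0 ≤ 1 / ((n : ℝ) + 1)),
          Real.norm_eq_abs])
    rw [Real.norm_eq_abs] at this
    exact this.trans (Real.tsum_le_of_sum_range_le hnn hpb)
  rw [dist_zero_right, norm_mul, Real.norm_of_nonneg (by positivity), Real.norm_eq_abs,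
    one_div_mul_eq_div, div_lt_iff₀ hl0]
  refine hb.trans_lt ?_
  rw [div_lt_iff₀ (by positivity)] at hl
  have : (m:ℝ) + η * (1 + (log τ - log a) / d) + 2 * K / τ ^ 2 = R + (e / 2) * (- log a) := by
    rw [hR, hηdef]; field_simp; ring
  rw [this]
  linarith

/-- anticoncentration recursion for Gaussian measures -/
lemma gauss_rec (q N : ℕ) (C : ℝ) (hC0 : 0 < C)
    (hC : ∀ Q : Polynomial ℝ, Q.natDegree ≤ 2 * q →
    ∀ S ⊆ Finset.range N, 2 * q < S.card → ∀ t : ℝ, (∀ i ∈ S, |Q.eval (i : ℝ)| ≤ t) →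
    |Q.eval 0| ≤ C * t ∧ |Q.eval 1| ≤ C * t)
    {E : Type*} [NormedAddCommGroup E] [NormedSpace ℝ E] [MeasurableSpace E] [BorelSpace E]
    [SecondCountableTopology E] [CompleteSpace E]
    (μ : Measure E) [IsGaussian μ] (hμ : ∀ L : StrongDual ℝ E, μ[L] = 0)
    (f : E → ℝ) (hf : Measurable f)
    (hQ : ∀ x y : E, ∃ Q : Polynomial ℝ, Q.natDegree ≤ 2 * q ∧ ∀ s : ℝ, Q.eval s =
      (1 + s ^ 2) ^ q * f (((1 - s ^ 2) / (1 + s ^ 2)) • x + ((2 * s) / (1 + s ^ 2)) • y))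
    (t : ℝ) (ht : 0 ≤ t) :
    N * μ.real {x | |f x| ≤ t} ≤
      2 * q + N * μ.real {x | |f x| ≤ C * (1 + (N : ℝ) ^ 2) ^ q * t} ^ 2 := by
  set T := C * (1 + (N : ℝ) ^ 2) ^ q * t with hT
  let g : ℕ → E × E → ℝ := fun i p =>
    f (((1 - (i : ℝ) ^ 2) / (1 + (i : ℝ) ^ 2)) • p.1 + ((2 * (i : ℝ)) / (1 + (i : ℝ) ^ 2)) • p.2)
  have hg : ∀ i, Measurable (g i) := fun i => hf.comp (by fun_prop)
  let A : ℕ → Set (E × E) := fun i => {p | |g i p| ≤ t}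
  have hA : ∀ i, MeasurableSet (A i) := fun i =>
    measurableSet_le (continuous_abs.measurable.comp (hg i)) measurable_const
  have hS : ∀ r : ℝ, MeasurableSet {x | |f x| ≤ r} := fun r =>
    measurableSet_le (continuous_abs.measurable.comp hf) measurable_const
  let G : Set (E × E) := {x | |f x| ≤ T} ×ˢ {x | |f x| ≤ T}
  have hG : MeasurableSet G := (hS T).prod (hS T)
  have hμA : ∀ i, (μ.prod μ).real (A i) = μ.real {x | |f x| ≤ t} := by
    intro i
    obtain ⟨θ, h1, h2⟩ := exists_angle (i : ℝ)
    have hrot := IsGaussian.map_rotation_eq_self_of_forall_strongDual_eq_zero (μ := μ) hμ θ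
    have hset : A i = (ContinuousLinearMap.rotation θ : E × E →L[ℝ] E × E) ⁻¹'
        ({x | |f x| ≤ t} ×ˢ Set.univ) := by
      ext p
      simp [A, g, ContinuousLinearMap.rotation_apply, h1, h2]
    rw [hset, measureReal_def, ← Measure.map_apply (by fun_prop) ((hS t).prod MeasurableSet.univ),
      hrot, Measure.prod_prod]
    simp [measureReal_def]
  have hμG : (μ.prod μ).real G = μ.real {x | |f x| ≤ T} ^ 2 := by
    rw [measureReal_prod_prod, sq]
  have hpt : ∀ p : E × E, ∑ i ∈ Finset.range N, (A i).indicator (fun _ => (1:ℝ)) p ≤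
      2 * q + N * G.indicator (fun _ => (1:ℝ)) p := by
    classical
    intro p
    have hsum : ∑ i ∈ Finset.range N, (A i).indicator (fun _ => (1:ℝ)) p
        = (((Finset.range N).filter (fun i => p ∈ A i)).card : ℝ) := by
      simp [Set.indicator_apply]
    rw [hsum]
    set S := (Finset.range N).filter (fun i => p ∈ A i) with hSdef
    have hSN : S ⊆ Finset.range N := Finset.filter_subset _ _
    have hG0 : 0 ≤ G.indicator (fun _ => (1:ℝ)) p :=
      Set.indicator_nonneg (fun _ _ => zero_le_one) p
    by_cases hcard : 2 * q < S.card
    · obtain ⟨Q, hQd, hQe⟩ := hQ p.1 p.2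
      have hb := hC Q hQd S hSN hcard ((1 + (N:ℝ) ^ 2) ^ q * t) (by
        intro i hi
        have hi1 : i < N := Finset.mem_range.mp (hSN hi)
        have hi2 : |g i p| ≤ t := (Finset.mem_filter.mp hi).2
        have hiN : (i : ℝ) ≤ N := by exact_mod_cast hi1.le
        rw [hQe, abs_mul, abs_of_nonneg (by positivity)]
        exact mul_le_mul (by gcongr) hi2 (abs_nonneg _) (by positivity))
      have hpG : p ∈ G := by
        constructor
        · have h := hb.1
          rw [hQe] at h
          simp only [ne_eq, OfNat.ofNat_ne_zero, not_false_eq_true, zero_pow, add_zero, one_pow,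
            sub_zero, div_one, one_smul, mul_zero, zero_smul, one_mul] at h
          show |f p.1| ≤ T
          rw [hT]; linarith
        · have h := hb.2
          rw [hQe] at h
          norm_num at h
          show |f p.2| ≤ T
          have h2 : (1:ℝ) ≤ 2 ^ q := one_le_pow₀ (by norm_num)
          have := abs_nonneg (f p.2)
          rw [hT]; nlinarith
      rw [Set.indicator_of_mem hpG]
      have : (S.card : ℝ) ≤ N := by
        have := Finset.card_le_card hSN
        rw [Finset.card_range] at this
        exact_mod_cast this
      have : (0:ℝ) ≤ q := by positivity
      linarith
    · push Not at hcard
      have : (S.card : ℝ) ≤ 2 * q := by exact_mod_cast hcard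
      have : 0 ≤ N * G.indicator (fun _ => (1:ℝ)) p := by positivity
      linarith
  have hi : ∀ {s : Set (E × E)}, MeasurableSet s →
      Integrable (s.indicator (fun _ => (1:ℝ))) (μ.prod μ) := fun hs =>
    (integrable_const _).indicator hs
  have := integral_mono (μ := μ.prod μ) (integrable_finsetSum _ (fun i _ => hi (hA i)))
    ((integrable_const (2 * q : ℝ)).add ((hi hG).const_mul (N:ℝ))) hpt
  simp only [Pi.add_apply] at this
  rw [integral_finsetSum _ (fun i _ => hi (hA i)),
    integral_add (integrable_const _) ((hi hG).const_mul (N:ℝ)), integral_const_mul (N:ℝ) (G.indicator (fun _ => (1:ℝ)))] at this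
  simp only [integral_indicator_const _ (hA _), integral_indicator_const _ hG, hμA, hμG] at this
  simpa using this



lemma measurable_hermiteVariation {Ω : Type*} [MeasureSpace Ω]
    (B : ℝ → Ω → ℝ) (H : ℝ) (q n : ℕ) (hB : ∀ t, Measurable (B t)) :
    Measurable (hermiteVariation B H q n) := by
  unfold hermiteVariation
  refine Finset.measurable_sum _ fun k _ => ?_
  exact (Polynomial.continuous_aeval _).measurable.comp
    (((hB _).sub (hB _)).const_mul _)

lemma hermite_rec (q N : ℕ) (C : ℝ) (hC0 : 0 < C)
    (hC : ∀ Q : Polynomial ℝ, Q.natDegree ≤ 2 * q →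
    ∀ S ⊆ Finset.range N, 2 * q < S.card → ∀ t : ℝ, (∀ i ∈ S, |Q.eval (i : ℝ)| ≤ t) →
    |Q.eval 0| ≤ C * t ∧ |Q.eval 1| ≤ C * t)
    {Ω : Type*} [MeasureSpace Ω] [IsProbabilityMeasure (ℙ : Measure Ω)]
    (H : ℝ) (B : ℝ → Ω → ℝ) (hB : IsFractionalBrownianMotion B H) (n : ℕ) (r t : ℝ) (ht : 0 ≤ t) :
    N * (ℙ : Measure Ω).real {ω | |hermiteVariation B H q n ω / r| ≤ t} ≤
      2 * q + N * (ℙ : Measure Ω).real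
        {ω | |hermiteVariation B H q n ω / r| ≤ C * (1 + (N : ℝ) ^ 2) ^ q * t} ^ 2 := by
  let X : Ω → (Fin (n + 1) → ℝ) := fun ω i => B ((i : ℕ) / (n : ℝ)) ω
  have hX : Measurable X := measurable_pi_lambda _ fun i => hB.measurable _
  let μ : Measure (Fin (n + 1) → ℝ) := (ℙ : Measure Ω).map X
  have hmap : ∀ L : StrongDual ℝ (Fin (n + 1) → ℝ), ∃ v : NNReal,
      μ.map L = gaussianReal 0 v := by
    intro L
    obtain ⟨v, hv⟩ := hB.gaussian_fdd (n + 1) (fun i => (i : ℕ) / (n : ℝ))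
      (fun i => by positivity) (fun i => L (Pi.single i 1))
    refine ⟨v, ?_⟩
    rw [Measure.map_map (by fun_prop) hX, ← hv]
    congr 1
    ext ω
    have : X ω = ∑ i, X ω i • (Pi.single i 1 : Fin (n + 1) → ℝ) := by
      ext j; simp [Finset.sum_apply, Pi.single_apply]
    rw [Function.comp_apply, this, map_sum]
    refine Finset.sum_congr rfl fun i _ => ?_
    rw [map_smul, smul_eq_mul, mul_comm]
  have : IsGaussian μ := isGaussian_of_map_eq_gaussianReal fun L => ⟨0, hmap L⟩
  have hμ : ∀ L : StrongDual ℝ (Fin (n + 1) → ℝ), μ[L] = 0 := by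
    intro L
    obtain ⟨v, hv⟩ := hmap L
    have : ∫ x, L x ∂μ = ∫ y, y ∂(μ.map L) :=
      (integral_map (f := fun y : ℝ => y) L.continuous.measurable.aemeasurable
        continuous_id.aestronglyMeasurable).symm
    rw [this, hv, integral_id_gaussianReal]
  let u : ℕ → (Fin (n + 1) → ℝ) → ℝ := fun k x => if h : k < n then
    (n : ℝ) ^ H * (x ⟨k + 1, by omega⟩ - x ⟨k, by omega⟩) else 0
  let f : (Fin (n + 1) → ℝ) → ℝ := fun x =>
    (∑ k ∈ Finset.range n, Polynomial.aeval (u k x) (Polynomial.hermite q)) / r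
  have hu : ∀ k, Measurable (u k) := by
    intro k
    simp only [u]
    split_ifs
    · fun_prop
    · fun_prop
  have hf : Measurable f := by
    refine Measurable.div_const (Finset.measurable_sum _ fun k _ => ?_) r
    exact (Polynomial.continuous_aeval _).measurable.comp (hu k)
  have hfX : ∀ ω, f (X ω) = hermiteVariation B H q n ω / r := by
    intro ω
    simp only [f, hermiteVariation]
    congr 1
    refine Finset.sum_congr rfl fun k hk => ?_
    have hk' : k < n := Finset.mem_range.mp hk
    simp [u, hk', X]
  have hQ : ∀ x y : (Fin (n + 1) → ℝ), ∃ Q : Polynomial ℝ, Q.natDegree ≤ 2 * q ∧ ∀ s : ℝ, Q.eval s =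
      (1 + s ^ 2) ^ q * f (((1 - s ^ 2) / (1 + s ^ 2)) • x + ((2 * s) / (1 + s ^ 2)) • y) := by
    intro x y
    choose Q hQ1 hQ2 using fun k : ℕ => exists_poly q (Polynomial.hermite q)
      (Polynomial.natDegree_hermite (n := q)).le (u k x) (u k y)
    refine ⟨Polynomial.C (r⁻¹) * ∑ k ∈ Finset.range n, Q k, ?_, ?_⟩
    · refine (Polynomial.natDegree_C_mul_le _ _).trans ?_
      exact Polynomial.natDegree_sum_le_of_forall_le _ _ fun k _ => hQ1 k
    · intro s
      have hlin : ∀ k (α β : ℝ), u k (α • x + β • y) = α * u k x + β * u k y := by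
        intro k α β
        simp only [u]
        split_ifs
        · simp; ring
        · simp
      simp only [Polynomial.eval_mul, Polynomial.eval_C, Polynomial.eval_finsetSum, hQ2, f, hlin]
      rw [← Finset.mul_sum]; ring
  have key := gauss_rec q N C hC0 hC μ hμ f hf hQ t ht
  have hS : ∀ r : ℝ, MeasurableSet {x | |f x| ≤ r} := fun r =>
    measurableSet_le (continuous_abs.measurable.comp hf) measurable_const
  have hreal : ∀ T : ℝ, μ.real {x | |f x| ≤ T} =
      (ℙ : Measure Ω).real {ω | |hermiteVariation B H q n ω / r| ≤ T} := by
    intro T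
    rw [map_measureReal_apply hX (hS T)]
    congr 1
    ext ω
    simp [hfX]
  rwa [hreal, hreal] at key

/-- Markov bound in the real form -/
lemma markov_real {Ω : Type*} [MeasurableSpace Ω] (P : Measure Ω) [IsProbabilityMeasure P]
    (X : Ω → ℝ) (hX : AEStronglyMeasurable X P) (hn : eLpNorm X 2 P ≤ 2) (t : ℝ) (ht : 0 < t) :
    P.real {ω | t < X ω} ≤ 4 / t ^ 2 := by
  have h := meas_ge_le_mul_pow_eLpNorm_enorm P (p := 2) (by norm_num) (by norm_num) hX
    (ε := ENNReal.ofReal t) (by simpa using ht) (by simp)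
  have hsub : {ω | t < X ω} ⊆ {ω | ENNReal.ofReal t ≤ ‖X ω‖ₑ} := by
    intro ω hω
    have hω : t < X ω := hω
    show ENNReal.ofReal t ≤ ‖X ω‖ₑ
    rw [Real.enorm_eq_ofReal_abs]
    exact ENNReal.ofReal_le_ofReal (hω.le.trans (le_abs_self _))
  have h2 : P {ω | t < X ω} ≤ ENNReal.ofReal (4 / t ^ 2) := by
    refine (measure_mono hsub).trans (h.trans ?_)
    simp only [ENNReal.toReal_ofNat, ENNReal.rpow_ofNat]
    calc _ ≤ (ENNReal.ofReal t)⁻¹ ^ 2 * 2 ^ 2 := by gcongr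
      _ = ENNReal.ofReal (4 / t ^ 2) := by
        rw [← ENNReal.ofReal_inv_of_pos ht, ← ENNReal.ofReal_pow (by positivity),
          show (2:ENNReal) ^ 2 = ENNReal.ofReal 4 by norm_num, ← ENNReal.ofReal_mul (by positivity)]
        congr 1
        field_simp
  rw [measureReal_def]
  exact ENNReal.toReal_le_of_le_ofReal (by positivity) h2

lemma right_cont {Ω : Type*} [MeasurableSpace Ω] (P : Measure Ω) [IsProbabilityMeasure P]
    (W : Ω → ℝ) (hW : AEMeasurable W P) :
    Tendsto (fun t => P.real {ω | W ω ≤ t}) (𝓝[>] 0) (𝓝 (P.real {ω | W ω ≤ 0})) := by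
  have hp : IsProbabilityMeasure (P.map W) := Measure.isProbabilityMeasure_map hW
  have hc : ∀ t, cdf (P.map W) t = P.real {ω | W ω ≤ t} := by
    intro t
    rw [cdf_eq_real, measureReal_def, Measure.map_apply_of_aemeasurable hW measurableSet_Iic]
    rfl
  have h := (cdf (P.map W)).right_continuous 0
  have h2 : Tendsto (cdf (P.map W)) (𝓝[>] 0) (𝓝 (cdf (P.map W) 0)) :=
    h.mono_left (nhdsWithin_mono _ Set.Ioi_subset_Ici_self)
  rw [hc 0] at h2
  exact h2.congr hc

lemma no_atom {Ω : Type*} [MeasurableSpace Ω] (P : Measure Ω) [IsProbabilityMeasure P]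
    (X : ℕ → Ω → ℝ) (W : Ω → ℝ) (hW : AEMeasurable W P) (q : ℕ)
    (hrec : ∀ N : ℕ, ∃ C : ℝ, 0 < C ∧ ∀ n t, 0 ≤ t → N * P.real {ω | X n ω ≤ t} ≤
      2 * q + N * P.real {ω | X n ω ≤ C * t} ^ 2)
    (hconv : ∀ t, 0 < t → Tendsto (fun n => P.real {ω | t ≤ |X n ω - W ω|}) atTop (𝓝 0))
    (hne : P.real {ω | W ω ≤ 0} ≠ 1) : P.real {ω | W ω ≤ 0} = 0 := by
  set p := P.real {ω | W ω ≤ 0} with hp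
  have step1 : ∀ N : ℕ, N * p ≤ 2 * q + N * p ^ 2 := by
    intro N
    obtain ⟨C, hC0, hC⟩ := hrec N
    have h1 : ∀ t, 0 < t → N * p ≤ 2 * q + N * P.real {ω | W ω ≤ (C + 1) * t} ^ 2 := by
      intro t ht
      have hlim : Tendsto (fun n => 2 * (q:ℝ) + N * (P.real {ω | W ω ≤ (C + 1) * t} +
          P.real {ω | t ≤ |X n ω - W ω|}) ^ 2 + N * P.real {ω | t ≤ |X n ω - W ω|}) atTop
          (𝓝 (2 * (q:ℝ) + N * (P.real {ω | W ω ≤ (C + 1) * t} + 0) ^ 2 + N * 0)) := by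
        have := hconv t ht
        exact (((this.const_add _).pow 2).const_mul _ |>.const_add _).add (this.const_mul _)
      rw [add_zero, mul_zero, add_zero] at hlim
      refine ge_of_tendsto' hlim fun n => ?_
      have e1 : p ≤ P.real {ω | X n ω ≤ t} + P.real {ω | t ≤ |X n ω - W ω|} := by
        refine (measureReal_mono ?_).trans (measureReal_union_le _ _)
        intro ω (hω : W ω ≤ 0)
        by_cases h : X n ω ≤ t
        · exact Or.inl h
        · refine Or.inr ?_
          push Not at h
          show t ≤ _
          exact le_trans (by linarith) (le_abs_self _)
      have e2 : P.real {ω | X n ω ≤ C * t} ≤ P.real {ω | W ω ≤ (C + 1) * t} +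
          P.real {ω | t ≤ |X n ω - W ω|} := by
        refine (measureReal_mono ?_).trans (measureReal_union_le _ _)
        intro ω (hω : X n ω ≤ C * t)
        by_cases h : W ω ≤ (C + 1) * t
        · exact Or.inl h
        · refine Or.inr ?_
          push Not at h
          show t ≤ _
          rw [abs_sub_comm]
          exact le_trans (by linarith) (le_abs_self _)
      have e3 := hC n t ht.le
      have e4 : P.real {ω | X n ω ≤ C * t} ^ 2 ≤ (P.real {ω | W ω ≤ (C + 1) * t} +
          P.real {ω | t ≤ |X n ω - W ω|}) ^ 2 := by gcongr
      have hN : (0:ℝ) ≤ N := by positivity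
      nlinarith [mul_le_mul_of_nonneg_left e1 hN, mul_le_mul_of_nonneg_left e4 hN]
    have ht : Tendsto (fun t : ℝ => (C + 1) * t) (𝓝[>] 0) (𝓝[>] 0) := by
      refine tendsto_nhdsWithin_iff.mpr ⟨?_, ?_⟩
      · have : Tendsto (fun ε : ℝ => (C + 1) * ε) (𝓝 0) (𝓝 ((C + 1) * 0)) := tendsto_id.const_mul _
        rw [mul_zero] at this
        exact this.mono_left nhdsWithin_le_nhds
      · filter_upwards [self_mem_nhdsWithin] with ε hε
        exact mul_pos (add_pos hC0 one_pos) hε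
    have hlim := (((right_cont P W hW).comp ht).pow 2).const_mul (N:ℝ) |>.const_add (2 * (q:ℝ))
    refine ge_of_tendsto hlim ?_
    filter_upwards [self_mem_nhdsWithin] with t ht
    exact h1 t ht
  have hp0 : 0 ≤ p := measureReal_nonneg
  have hp1 : p ≤ 1 := measureReal_le_one
  by_contra h0
  have hpos : 0 < p := lt_of_le_of_ne hp0 (Ne.symm h0)
  have hlt : p < 1 := lt_of_le_of_ne hp1 hne
  have hg : 0 < p * (1 - p) := mul_pos hpos (by linarith)
  obtain ⟨N, hN⟩ := exists_nat_gt ((2 * q : ℝ) / (p * (1 - p)))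
  rw [div_lt_iff₀ hg] at hN
  nlinarith [step1 N]

set_option maxHeartbeats 400000 in
lemma core {Ω : Type*} [MeasureSpace Ω] [IsProbabilityMeasure (ℙ : Measure Ω)]
    (q : ℕ) (H d : ℝ) (hd : 1 / 2 < d)
    (B : ℝ → Ω → ℝ) (hB : IsFractionalBrownianMotion B H)
    (c₂ : ℝ) (hc₂ : 0 < c₂) (Z : Ω → ℝ)
    (hZvar : (∫ ω, (Z ω) ^ 2 ∂(ℙ : Measure Ω)) = 1)
    (hconv : Tendsto
      (fun n : ℕ => eLpNorm
        (fun ω => hermiteVariation B H q n ω / (c₂ * (n : ℝ) ^ d) - Z ω)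
        2 (ℙ : Measure Ω))
      atTop (𝓝 0))
    (c : ℝ) (hc : 0 < c) :
    Tendsto
      (fun ε : ℝ =>
        (1 / (-Real.log (c * ε))) *
          ((∑' n : ℕ, (1 / ((n : ℝ) + 1)) *
              (ℙ {ω | c * ε * ((n : ℝ) + 1) ^ d <
                |hermiteVariation B H q (n + 1) ω /
                  (c₂ * ((n : ℝ) + 1) ^ d)|}).toReal) -
            ∑' n : ℕ, (1 / ((n : ℝ) + 1)) *
              (ℙ {ω | c * ε * ((n : ℝ) + 1) ^ d < |Z ω|}).toReal))
      (𝓝[>] 0) (𝓝 0) := by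
  -- only `|Z|` matters, and it is a.e.-measurable
  have hZint : Integrable (fun ω => (Z ω) ^ 2) (ℙ : Measure Ω) := by
    by_contra h
    rw [integral_undef h] at hZvar
    norm_num at hZvar
  let W : Ω → ℝ := fun ω => |Z ω|
  have hW : AEMeasurable W (ℙ : Measure Ω) := by
    have : W = fun ω => √((Z ω) ^ 2) := by ext ω; exact (Real.sqrt_sq_eq_abs _).symm
    rw [this]
    exact hZint.aestronglyMeasurable.aemeasurable.sqrt
  have hW2 : eLpNorm W 2 (ℙ : Measure Ω) = 1 := by
    rw [eLpNorm_eq_lintegral_rpow_enorm_toReal (by norm_num) (by norm_num)]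
    have : ∫⁻ ω, ‖W ω‖ₑ ^ (2 : ENNReal).toReal ∂(ℙ : Measure Ω) = 1 := by
      have h := ofReal_integral_eq_lintegral_ofReal hZint (ae_of_all _ fun ω => sq_nonneg _)
      rw [hZvar, ENNReal.ofReal_one] at h
      rw [h]
      refine lintegral_congr fun ω => ?_
      simp only [W, ENNReal.toReal_ofNat, ENNReal.rpow_ofNat]
      rw [Real.enorm_eq_ofReal_abs, abs_abs, ← ENNReal.ofReal_pow (abs_nonneg _), sq_abs]
    rw [this]; simp
  let X : ℕ → Ω → ℝ := fun n ω => |hermiteVariation B H q n ω / (c₂ * (n : ℝ) ^ d)|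
  have hX : ∀ n, Measurable (X n) := fun n =>
    continuous_abs.measurable.comp
      ((measurable_hermiteVariation B H q n hB.measurable).div_const _)
  have hL2 : Tendsto (fun n => eLpNorm (X n - W) 2 (ℙ : Measure Ω)) atTop (𝓝 0) := by
    refine tendsto_of_tendsto_of_tendsto_of_le_of_le tendsto_const_nhds hconv
      (fun _ => zero_le) (fun n => ?_)
    refine eLpNorm_mono fun ω => ?_
    simp only [Pi.sub_apply, X, W, Real.norm_eq_abs]
    exact abs_abs_sub_abs_le_abs_sub _ _
  have hTIM : TendstoInMeasure (ℙ : Measure Ω) X atTop W :=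
    tendstoInMeasure_of_tendsto_eLpNorm (p := 2) two_ne_zero
      (fun n => (hX n).aestronglyMeasurable) hW.aestronglyMeasurable hL2
  have hmeas : ∀ t, 0 < t →
      Tendsto (fun n => (ℙ : Measure Ω).real {ω | t ≤ |X n ω - W ω|}) atTop (𝓝 0) :=
    fun t ht => tendstoInMeasure_iff_measureReal_norm.mp hTIM t ht
  -- no atom at zero
  have hatom : (ℙ : Measure Ω).real {ω | W ω ≤ 0} = 0 := by
    refine no_atom (ℙ : Measure Ω) X W hW q ?_ hmeas ?_
    · intro N
      obtain ⟨C, hC0, hC⟩ := poly_const q N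
      exact ⟨C * (1 + (N : ℝ) ^ 2) ^ q, by positivity, fun n t ht =>
        hermite_rec q N C hC0 hC H B hB n _ t ht⟩
    · intro h1
      have hms : NullMeasurableSet {ω | W ω ≤ 0} (ℙ : Measure Ω) :=
        nullMeasurableSet_le hW aemeasurable_const
      have hae : ∀ᵐ ω ∂(ℙ : Measure Ω), W ω ≤ 0 := by
        have h1' : (ℙ : Measure Ω) {ω | W ω ≤ 0} = 1 := by
          rw [measureReal_def] at h1
          rwa [ENNReal.toReal_eq_one_iff] at h1
        exact (prob_compl_eq_zero_iff₀ hms).mpr h1'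
      have : ∫ ω, (Z ω) ^ 2 ∂(ℙ : Measure Ω) = 0 := by
        refine integral_eq_zero_of_ae ?_
        filter_upwards [hae] with ω hω
        have : |Z ω| = 0 := le_antisymm hω (abs_nonneg _)
        simp [abs_eq_zero.mp this]
      rw [this] at hZvar
      norm_num at hZvar
  have hbd : ∀ᶠ n in atTop, eLpNorm (X n) 2 (ℙ : Measure Ω) ≤ 2 := by
    filter_upwards [hL2.eventually (gt_mem_nhds zero_lt_one)] with n hn
    have : X n = (X n - W) + W := by simp
    rw [this]
    refine (eLpNorm_add_le ((hX n).aestronglyMeasurable.sub hW.aestronglyMeasurable)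
      hW.aestronglyMeasurable (by norm_num)).trans ?_
    rw [hW2]
    exact (add_le_add_left hn.le 1).trans (le_of_eq one_add_one_eq_two)
  obtain ⟨m₀, hm₀⟩ := eventually_atTop.mp hbd
  have hcompl : ∀ (Y : Ω → ℝ), AEMeasurable Y (ℙ : Measure Ω) → ∀ t : ℝ,
      1 - (ℙ : Measure Ω).real {ω | t < Y ω} = (ℙ : Measure Ω).real {ω | Y ω ≤ t} := by
    intro Y hY t
    have hn : NullMeasurableSet {ω | t < Y ω} (ℙ : Measure Ω) :=
      nullMeasurableSet_lt aemeasurable_const hY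
    rw [← probReal_compl_eq_one_sub₀ hn]
    congr 1
    ext ω; simp
  have hη : ∀ η : ℝ, 0 < η → ∃ τ, 0 < τ ∧ ∃ m₁ : ℕ,
      (∀ t, t ≤ τ → 1 - (ℙ : Measure Ω).real {ω | t < W ω} ≤ η) ∧
      ∀ n, m₁ ≤ n → ∀ t, t ≤ τ → 1 - (ℙ : Measure Ω).real {ω | t < X (n + 1) ω} ≤ η := by
    intro η hη
    have hr := right_cont (ℙ : Measure Ω) W hW
    rw [hatom] at hr
    obtain ⟨σ, hσ1, hσ0⟩ := ((hr.eventually (gt_mem_nhds (half_pos hη))).and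
      self_mem_nhdsWithin).exists
    have hσ0 : 0 < σ := hσ0
    obtain ⟨m₁, hm₁⟩ := eventually_atTop.mp
      ((hmeas (σ / 2) (by linarith)).eventually (gt_mem_nhds (half_pos hη)))
    refine ⟨σ / 2, by linarith, m₁, fun t ht => ?_, fun n hn t ht => ?_⟩
    · rw [hcompl W hW]
      have : (ℙ : Measure Ω).real {ω | W ω ≤ t} ≤ (ℙ : Measure Ω).real {ω | W ω ≤ σ} :=
        measureReal_mono fun ω (hω : W ω ≤ t) => (by linarith : W ω ≤ σ)
      linarith
    · rw [hcompl _ (hX _).aemeasurable]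
      have h1 := hm₁ (n + 1) (by omega)
      have : (ℙ : Measure Ω).real {ω | X (n + 1) ω ≤ t} ≤ (ℙ : Measure Ω).real {ω | W ω ≤ σ}
          + (ℙ : Measure Ω).real {ω | σ / 2 ≤ |X (n + 1) ω - W ω|} := by
        refine (measureReal_mono ?_).trans (measureReal_union_le _ _)
        intro ω (hω : X (n + 1) ω ≤ t)
        by_cases h : W ω ≤ σ
        · exact Or.inl h
        · refine Or.inr ?_
          push Not at h
          show σ / 2 ≤ _
          rw [abs_sub_comm]
          exact le_trans (by linarith) (le_abs_self _)
      linarith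
  have := analytic d 4 hd (by norm_num)
    (fun n t => (ℙ : Measure Ω).real {ω | t < X (n + 1) ω})
    (fun t => (ℙ : Measure Ω).real {ω | t < W ω})
    (fun _ _ => measureReal_nonneg) (fun _ _ => measureReal_le_one)
    (fun _ => measureReal_nonneg) (fun _ => measureReal_le_one) m₀
    (fun n hn t ht => markov_real _ _ (hX _).aestronglyMeasurable (hm₀ _ (by omega)) t ht)
    (fun t ht => markov_real _ _ hW.aestronglyMeasurable (by rw [hW2]; norm_num) t ht)
    hη c hc
  simpa only [X, W, measureReal_def, Nat.cast_add, Nat.cast_one] using this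

theorem stmt_5 {Ω : Type*} [MeasureSpace Ω] [IsProbabilityMeasure (ℙ : Measure Ω)]
    (q : ℕ) (hq : 2 ≤ q) (H : ℝ) (hH0 : 1 - 1 / (2 * q) < H) (hH1 : H < 1)
    (B : ℝ → Ω → ℝ) (hB : IsFractionalBrownianMotion B H)
    (c₂ : ℝ) (hc₂ : 0 < c₂) (Z : Ω → ℝ)
    (hZvar : (∫ ω, (Z ω) ^ 2 ∂(ℙ : Measure Ω)) = 1)
    (hconv : Tendsto
      (fun n : ℕ => eLpNorm
        (fun ω => hermiteVariation B H q n ω / (c₂ * (n : ℝ) ^ (1 - q * (1 - H))) - Z ω)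
        2 (ℙ : Measure Ω))
      atTop (𝓝 0))
    (c : ℝ) (hc : 0 < c) :
    Tendsto
      (fun ε : ℝ =>
        (1 / (-Real.log (c * ε))) *
          ((∑' n : ℕ, (1 / ((n : ℝ) + 1)) *
              (ℙ {ω | c * ε * ((n : ℝ) + 1) ^ (1 - q * (1 - H)) <
                |hermiteVariation B H q (n + 1) ω /
                  (c₂ * ((n : ℝ) + 1) ^ (1 - q * (1 - H)))|}).toReal) -
            ∑' n : ℕ, (1 / ((n : ℝ) + 1)) *
              (ℙ {ω | c * ε * ((n : ℝ) + 1) ^ (1 - q * (1 - H)) < |Z ω|}).toReal))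
      (𝓝[>] 0) (𝓝 0) := by
  have hd : 1 / 2 < 1 - q * (1 - H) := by
    have hq0 : (0:ℝ) < q := by exact_mod_cast (by omega : 0 < q)
    have : 1 - H < 1 / (2 * q) := by linarith
    have h2 := mul_lt_mul_of_pos_left this hq0
    have h3 : (q:ℝ) * (1 / (2 * q)) = 1 / 2 := by field_simp
    linarith
  exact core q H _ hd B hB c₂ hc₂ Z hZvar hconv c hc
end
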